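/- Let φ : S¹ → ℝ be a C^∞ function whose critical points on the circle are exactly n nondegenerate local extremum points with pairwise distinct values. Then for every integer i with 0 ≤ i ≤ n/2 + 1 there exists a marking ν of the nodes of φ such that γ((φ, ν)) = i. -/

import Mathlib

open scoped RealInnerProductSpace

noncomputable section

abbrev E2 : Type := EuclideanSpace ℝ (Fin 2)

/-- The point (cos t, sin t) on the unit circle in ℝ². -/
def sphPt (t : ℝ) : E2 := (EuclideanSpace.equiv (Fin 2) ℝ).symm ![Real.cos t, Real.sin t]

/-- A ribbon with `n` nodes, encoded via the angle parametrization `g = φ ∘ (cos, sin)`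
of a C^∞ function `φ : S¹ → ℝ` whose critical points on the circle are exactly the `n`
nondegenerate local extrema (nodes) at angles `θ 0 < θ 1 < ⋯ < θ (n-1)` in `[0, 2π)`,
with pairwise distinct critical values, together with a marking `ν` of the nodes by `±1`. -/
structure Ribbon (n : ℕ) : Type where
  g : ℝ → ℝ
  θ : Fin n → ℝ
  ν : Fin n → ℤ
  n_even : Even n
  n_pos : 0 < n
  smooth_g : ContDiff ℝ (⊤ : ℕ∞) g
  periodic_g : Function.Periodic g (2 * Real.pi)
  theta_mem : ∀ i, θ i ∈ Set.Ico (0 : ℝ) (2 * Real.pi)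
  theta_mono : StrictMono θ
  node_crit : ∀ i, deriv g (θ i) = 0
  node_nondeg : ∀ i, deriv (deriv g) (θ i) ≠ 0
  crit_only : ∀ t ∈ Set.Ico (0 : ℝ) (2 * Real.pi), deriv g t = 0 → ∃ i, t = θ i
  values_distinct : ∀ i j, g (θ i) = g (θ j) → i = j
  nu_sign : ∀ i, ν i = 1 ∨ ν i = -1

/-- The signature σ = s₊ − s₋ of a ribbon. -/
def Ribbon.sigma {n : ℕ} (a : Ribbon n) : ℤ := ∑ i, a.ν i

/-- Critical points of `f` in the open unit disk. -/
def critPts (f : E2 → ℝ) : Set E2 :=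
  {x | x ∈ Metric.ball (0 : E2) 1 ∧ fderiv ℝ f x = 0}

/-- `f : ℝ² → ℝ` is an extension of the ribbon `a`: it is C^∞, agrees with `φ` on the unit
circle, has nowhere-vanishing gradient on the circle, and at each node the radial derivative
`⟪∇f(p), p⟫` has sign `ν p` if `p` is a local maximum of `φ` (second derivative of `g`
negative there) and sign `−ν p` if `p` is a local minimum of `φ`. -/
def IsExtension {n : ℕ} (a : Ribbon n) (f : E2 → ℝ) : Prop :=
  ContDiff ℝ (⊤ : ℕ∞) f ∧
  (∀ t : ℝ, f (sphPt t) = a.g t) ∧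
  (∀ x ∈ Metric.sphere (0 : E2) 1, fderiv ℝ f x ≠ 0) ∧
  (∀ i : Fin n,
    (deriv (deriv a.g) (a.θ i) < 0 →
      0 < (a.ν i : ℝ) * ⟪gradient f (sphPt (a.θ i)), sphPt (a.θ i)⟫) ∧
    (0 < deriv (deriv a.g) (a.θ i) →
      (a.ν i : ℝ) * ⟪gradient f (sphPt (a.θ i)), sphPt (a.θ i)⟫ < 0))

/-- The ribbon invariant γ: the infimum, over all extensions `f` of `a`, of the number of
critical points of `f` in the open unit disk (a value in `ℕ∞`). -/
def gammaR {n : ℕ} (a : Ribbon n) : ℕ∞ :=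
  sInf {k : ℕ∞ | ∃ f : E2 → ℝ, IsExtension a f ∧ (critPts f).encard = k}

/-! Prescribe the set `U` of nodes at which the extension increases outward. If `U` consists of the
global maximum, a tilted plane can be deformed into `φ` without creating critical points, so
`γ = 0`. If `U` consists of local minima, then `γ = |U| + 1`. Each node of `U` is half a saddle of
the extension. Either it merges two components of superlevel sets in the disk, or these are already
joined above it, and the joining path walls off a sublevel component containing an interior local
minimum. Mergers force one local maximum each plus one more by the elder rule, and no maximum lies
on the circle. An explicit polar formula with a maximum at the origin attains the bound. By the
symmetry `φ ↦ -φ`, also `γ = |Uᶜ| + 1` when `Uᶜ` consists of local maxima, and there are at least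
`n / 2` nodes of one of the two kinds. -/

section PlanarPaths

open Complex
open scoped Real

open scoped ComplexOrder in
theorem one_sub_mem_slitPlane {z : ℂ} (hz : ‖z‖ ≤ 1) (hz1 : z ≠ 1) : 1 - z ∈ slitPlane := by
  refine Or.inl ?_
  rw [sub_re, one_re, sub_pos]
  refine ((re_le_norm z).trans hz).lt_of_ne fun hre => hz1 ?_
  have hnonneg : 0 ≤ z := re_eq_norm.1 ((re_le_norm z).antisymm (hre ▸ hz))
  exact Complex.ext hre (Complex.nonneg_iff.1 hnonneg).2.symm

theorem sub_eq_log_sub_log_of_exp_eq {X : Type*} [TopologicalSpace X] [PreconnectedSpace X]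
    {w ℓ : X → ℂ} {u κ : ℂ} (hu : ‖u‖ = 1) (hw : Continuous w) (hℓ : Continuous ℓ)
    (hw1 : ∀ s, ‖w s‖ ≤ 1) (hne : ∀ s, w s ≠ u) (hexp : ∀ s, exp (ℓ s) = κ * (w s - u)) (a b : X) :
    ℓ b - ℓ a = log (1 - w b / u) - log (1 - w a / u) := by
  have hu0 : u ≠ 0 := norm_ne_zero_iff.1 (hu ▸ one_ne_zero)
  have hslit (s) : 1 - w s / u ∈ slitPlane :=
    one_sub_mem_slitPlane (by rw [norm_div, hu, div_one]; exact hw1 s)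
      (by rw [Ne, div_eq_one_iff_eq hu0]; exact hne s)
  have hcont : Continuous fun s => ℓ s - log (1 - w s / u) :=
    hℓ.sub ((continuous_const.sub (hw.div_const u)).clog hslit)
  have hconst (s) : exp (ℓ s - log (1 - w s / u)) = -(κ * u) := by
    have h0 : 1 - w s / u ≠ 0 := slitPlane_ne_zero (hslit s)
    rw [exp_sub, exp_log h0, hexp, div_eq_iff h0]
    field_simp
    ring
  have heq := isCoveringMap_exp.const_of_comp hcont
    (fun a a' => Subtype.ext ((hconst a).trans (hconst a').symm)) b a
  linear_combination heq

theorem one_sub_exp_mul_I (ψ : ℝ) :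
    1 - exp (ψ * I) = (2 * Real.sin (ψ / 2) : ℝ) *
      (cos ((ψ - π) / 2 : ℝ) + sin ((ψ - π) / 2 : ℝ) * I) := by
  have hcos : Real.cos ((ψ - π) / 2) = Real.sin (ψ / 2) := by
    rw [sub_div, Real.cos_sub_pi_div_two]
  have hsin : Real.sin ((ψ - π) / 2) = -Real.cos (ψ / 2) := by
    rw [sub_div, Real.sin_sub_pi_div_two]
  have hψ : ψ = 2 * (ψ / 2) := by ring
  rw [exp_mul_I, ← ofReal_cos, ← ofReal_sin, ← ofReal_cos, ← ofReal_sin, hcos, hsin]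
  nth_rewrite 1 2 [hψ]
  rw [Real.cos_two_mul_eq_one_sub, Real.sin_two_mul]
  push_cast
  ring

theorem log_one_sub_exp_sub_log_one_sub_exp {α β : ℝ} (hαβ : α < β) (hβα : β < α + 2 * π) :
    log (1 - exp (β * I) / exp (α * I)) - log (1 - exp (α * I) / exp (β * I)) =
      (β - α - π) * I := by
  obtain ⟨ψ, rfl⟩ : ∃ ψ, β = α + ψ := ⟨β - α, by ring⟩
  have harg : arg (1 - exp (ψ * I)) = (ψ - π) / 2 := by
    rw [one_sub_exp_mul_I]
    refine arg_mul_cos_add_sin_mul_I ?_ ⟨by linarith, by linarith⟩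
    exact mul_pos two_pos (Real.sin_pos_of_pos_of_lt_pi (by linarith) (by linarith))
  have hdiv : exp ((α + ψ : ℝ) * I) / exp (α * I) = exp (ψ * I) := by
    rw [← exp_sub]; push_cast; ring_nf
  have hdiv' : 1 - exp (α * I) / exp ((α + ψ : ℝ) * I) =
      (starRingEnd ℂ) (1 - exp (ψ * I)) := by
    rw [map_sub, map_one, ← exp_conj, ← exp_sub, map_mul, conj_I, conj_ofReal]
    push_cast
    ring_nf
  have hpi : arg (1 - exp (ψ * I)) ≠ π := by
    rw [harg]
    linarith [Real.pi_pos]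
  rw [hdiv, hdiv', log_conj _ hpi]
  apply Complex.ext
  · simp
  · simp [log_im, harg]

theorem exists_continuous_exp_eq {X : Type*} [TopologicalSpace X] [SimplyConnectedSpace X]
    [LocallyPathConnectedSpace X] {g : X → ℂ} (hg : Continuous g) (hg0 : ∀ x, g x ≠ 0) :
    ∃ F : X → ℂ, Continuous F ∧ ∀ x, exp (F x) = g x := by
  obtain ⟨x₀⟩ : Nonempty X := inferInstance
  obtain ⟨F, ⟨-, hF⟩, -⟩ := isCoveringMapOn_exp.existsUnique_continuousMap_lifts
    ⟨g, hg⟩ (exp_log (hg0 x₀)) hg0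
  exact ⟨F, F.continuous, congrFun hF⟩

/- If the paths were disjoint, a logarithm of `γ₁ s - γ₂ t` would exist on the whole square; its
increments along the four sides are increments of principal logarithms, and they would sum to
`2πi` instead of `0`. -/
theorem exists_eq_of_interlaced {α θ β ζ : ℝ} (hαθ : α < θ) (hθβ : θ < β) (hβζ : β < ζ)
    (hζα : ζ < α + 2 * π) (γ₁ : Path (exp (α * I)) (exp (β * I)))
    (γ₂ : Path (exp (θ * I)) (exp (ζ * I))) (h₁ : ∀ s, ‖γ₁ s‖ ≤ 1) (h₂ : ∀ t, ‖γ₂ t‖ ≤ 1) :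
    ∃ s t, γ₁ s = γ₂ t := by
  by_contra! hne
  obtain ⟨F, hF, hexp⟩ := exists_continuous_exp_eq (X := ℝ × ℝ)
    (g := fun p => γ₁.extend p.1 - γ₂.extend p.2) (by fun_prop)
    (fun p => sub_ne_zero.2 (hne _ _))
  have bottom := sub_eq_log_sub_log_of_exp_eq (norm_exp_ofReal_mul_I θ)
    (ℓ := fun s => F (s, 0)) (κ := 1) γ₁.continuous_extend (by fun_prop) (fun s => h₁ _)
    (fun s h => hne _ 0 (h.trans γ₂.source.symm)) (fun s => by simp [hexp]) 0 1
  have top := sub_eq_log_sub_log_of_exp_eq (norm_exp_ofReal_mul_I ζ)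
    (ℓ := fun s => F (s, 1)) (κ := 1) γ₁.continuous_extend (by fun_prop) (fun s => h₁ _)
    (fun s h => hne _ 1 (h.trans γ₂.target.symm)) (fun s => by simp [hexp]) 0 1
  have left := sub_eq_log_sub_log_of_exp_eq (norm_exp_ofReal_mul_I α)
    (ℓ := fun t => F (0, t)) (κ := -1) γ₂.continuous_extend (by fun_prop) (fun t => h₂ _)
    (fun t h => hne 0 _ (γ₁.source.trans h.symm)) (fun t => by simp [hexp]) 0 1
  have right := sub_eq_log_sub_log_of_exp_eq (norm_exp_ofReal_mul_I β)
    (ℓ := fun t => F (1, t)) (κ := -1) γ₂.continuous_extend (by fun_prop) (fun t => h₂ _)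
    (fun t h => hne 1 _ (γ₁.target.trans h.symm)) (fun t => by simp [hexp]) 0 1
  simp only [Path.extend_zero, Path.extend_one] at bottom top left right
  have hβθ := log_one_sub_exp_sub_log_one_sub_exp hθβ (by linarith)
  have hθα := log_one_sub_exp_sub_log_one_sub_exp hαθ (by linarith)
  have hζβ := log_one_sub_exp_sub_log_one_sub_exp hβζ (by linarith)
  have hζα := log_one_sub_exp_sub_log_one_sub_exp (hαθ.trans (hθβ.trans hβζ)) hζα
  have hsum : 2 * π * I = 0 := by
    linear_combination bottom - top - left + right + hβθ + hθα + hζβ - hζα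
  exact two_pi_I_ne_zero hsum

end PlanarPaths

section PolarCoordinates

open Set Metric Filter Complex
open scoped Topology Real ContDiff

/-- The isometric identification of the plane with `ℂ`, used to transport angles and paths. -/
def toComplex : E2 ≃ₗᵢ[ℝ] ℂ := orthonormalBasisOneI.repr.symm

theorem toComplex_sphPt (t : ℝ) : toComplex (sphPt t) = exp (t * I) := by
  rw [exp_mul_I, ← ofReal_cos, ← ofReal_sin]
  exact orthonormalBasisOneI_repr_symm_apply _

theorem sphPt_eq_toComplex_symm (t : ℝ) : sphPt t = toComplex.symm (exp (t * I)) := by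
  rw [← toComplex_sphPt, LinearIsometryEquiv.symm_apply_apply]

theorem norm_sphPt (t : ℝ) : ‖sphPt t‖ = 1 := by
  rw [← toComplex.norm_map, toComplex_sphPt, norm_exp_ofReal_mul_I]

theorem norm_smul_sphPt {r : ℝ} (hr : 0 ≤ r) (t : ℝ) : ‖r • sphPt t‖ = r := by
  rw [norm_smul, norm_sphPt, mul_one, Real.norm_of_nonneg hr]

theorem periodic_sphPt : Function.Periodic sphPt (2 * π) := fun t => by
  rw [sphPt_eq_toComplex_symm, sphPt_eq_toComplex_symm]
  exact congrArg _ (by simpa only [ofReal_add, ofReal_mul, ofReal_ofNat] using exp_mul_I_periodic t)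

theorem hasDerivAt_sphPt (t : ℝ) : HasDerivAt sphPt (sphPt (t + π / 2)) t := by
  have hexp : HasDerivAt (fun t : ℝ => exp (t * I)) (exp ((t + π / 2 : ℝ) * I)) t := by
    have hderiv := ((hasDerivAt_id t).ofReal_comp.mul_const I).cexp
    rw [ofReal_add, add_mul, exp_add, ofReal_div, ofReal_ofNat, exp_pi_div_two_mul_I]
    simpa only [ofReal_one, one_mul, id_eq] using hderiv
  rw [funext sphPt_eq_toComplex_symm]
  exact toComplex.symm.toContinuousLinearEquiv.hasFDerivAt.comp_hasDerivAt t hexp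

theorem continuous_sphPt : Continuous sphPt :=
  continuous_iff_continuousAt.2 fun t => (hasDerivAt_sphPt t).continuousAt

theorem eq_norm_smul_sphPt (x : E2) (a : ℝ) : ∃ t ∈ Ico a (a + 2 * π), x = ‖x‖ • sphPt t := by
  obtain ⟨t, ht, harg⟩ := periodic_sphPt.exists_mem_Ico Real.two_pi_pos (arg (toComplex x)) a
  refine ⟨t, ht, toComplex.injective ?_⟩
  rw [← harg, map_smul, toComplex_sphPt, ← toComplex.norm_map, real_smul, norm_mul_exp_arg_mul_I]

theorem apply_arg_toComplex_smul_sphPt {β : Type*} {h : ℝ → β} (hp : Function.Periodic h (2 * π))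
    {r : ℝ} (hr : 0 < r) (t : ℝ) :
    h (arg (toComplex (r • sphPt t))) = h t := by
  rw [map_smul, toComplex_sphPt, real_smul, arg_real_mul _ hr, arg_exp_mul_I]
  exact hp.sub_zsmul_eq _

/-- The function on the plane given in polar coordinates by `F`. -/
def polarLift (F : ℝ → ℝ → ℝ) (x : E2) : ℝ := F ‖x‖ (arg (toComplex x))

variable {F : ℝ → ℝ → ℝ}

theorem polarLift_smul_sphPt (hF : ∀ r, Function.Periodic (F r) (2 * π)) {r : ℝ} (hr : 0 < r)
    (t : ℝ) : polarLift F (r • sphPt t) = F r t := by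
  rw [polarLift, norm_smul_sphPt hr.le, apply_arg_toComplex_smul_sphPt (hF r) hr]

/-- Rotating by `-t₀` moves the cut of the argument away from the ray of angle `t₀`. -/
theorem polarLift_eq_rotate (hF : ∀ r, Function.Periodic (F r) (2 * π)) (t₀ : ℝ) {x : E2}
    (hx : x ≠ 0) :
    polarLift F x = F ‖x‖ (arg (toComplex x * exp (-(t₀ * I))) + t₀) := by
  set s := arg (toComplex x * exp (-(t₀ * I)))
  have hpolar : x = ‖x‖ • sphPt (s + t₀) := by
    apply toComplex.injective
    have hnorm : ‖toComplex x * exp (-(t₀ * I))‖ = ‖x‖ := by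
      rw [norm_mul, ← neg_mul, ← ofReal_neg, norm_exp_ofReal_mul_I, mul_one, toComplex.norm_map]
    rw [map_smul, toComplex_sphPt, real_smul, ofReal_add, add_mul, exp_add, ← mul_assoc, ← hnorm,
      norm_mul_exp_arg_mul_I, mul_assoc, ← exp_add, neg_add_cancel, exp_zero, mul_one]
  conv_lhs => rw [hpolar]
  exact polarLift_smul_sphPt hF (norm_pos_iff.2 hx) _

theorem contDiffAt_polarLift (hF : ∀ r, Function.Periodic (F r) (2 * π))
    (hsmooth : ContDiff ℝ ∞ (Function.uncurry F)) {x : E2} (hx : x ≠ 0) :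
    ContDiffAt ℝ ∞ (polarLift F) x := by
  obtain ⟨t₀, -, hx₀⟩ := eq_norm_smul_sphPt x 0
  have hslit : toComplex x * exp (-(t₀ * I)) ∈ slitPlane := by
    rw [hx₀, map_smul, toComplex_sphPt, real_smul, mul_assoc, ← exp_add, add_neg_cancel, exp_zero,
      mul_one]
    exact ofReal_mem_slitPlane.2 (norm_pos_iff.2 hx)
  have harg : ContDiffAt ℝ ∞ (fun y => arg (toComplex y * exp (-(t₀ * I)))) x := by
    have hrot : ContDiffAt ℝ ∞ (fun y => toComplex y * exp (-(t₀ * I))) x :=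
      toComplex.contDiff.contDiffAt.mul contDiffAt_const
    have hlog : ContDiffAt ℝ ∞ log (toComplex x * exp (-(t₀ * I))) :=
      (contDiffAt_log hslit).restrict_scalars ℝ
    simpa only [Function.comp_def, imCLM_apply, log_im] using
      imCLM.contDiff.contDiffAt.comp x (hlog.comp x hrot)
  have hpolar : ContDiffAt ℝ ∞
      (fun y => (‖y‖, arg (toComplex y * exp (-(t₀ * I))) + t₀)) x :=
    (contDiffAt_norm ℝ hx).prodMk (harg.add contDiffAt_const)
  refine (hsmooth.contDiffAt.comp x hpolar).congr_of_eventuallyEq ?_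
  filter_upwards [isOpen_ne.mem_nhds hx] with y hy
  exact polarLift_eq_rotate hF t₀ hy

theorem hasDerivAt_comp_smul {E : Type*} [NormedAddCommGroup E] [NormedSpace ℝ E] {f : E → ℝ}
    {p : E} {r : ℝ} (hf : DifferentiableAt ℝ f (r • p)) :
    HasDerivAt (fun ρ : ℝ => f (ρ • p)) (fderiv ℝ f (r • p) p) r := by
  have hsmul : HasDerivAt (fun ρ : ℝ => ρ • p) p r := by
    simpa using (hasDerivAt_id r).smul_const p
  exact hf.hasFDerivAt.comp_hasDerivAt r hsmul

theorem hasDerivAt_comp_smul_sphPt {f : E2 → ℝ} {r t : ℝ}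
    (hf : DifferentiableAt ℝ f (r • sphPt t)) :
    HasDerivAt (fun s => f (r • sphPt s)) (fderiv ℝ f (r • sphPt t) (r • sphPt (t + π / 2))) t :=
  hf.hasFDerivAt.comp_hasDerivAt t ((hasDerivAt_sphPt t).const_smul r)

theorem fderiv_polarLift_apply_sphPt (hF : ∀ r, Function.Periodic (F r) (2 * π)) {r t : ℝ}
    (hr : 0 < r) (hf : DifferentiableAt ℝ (polarLift F) (r • sphPt t)) :
    fderiv ℝ (polarLift F) (r • sphPt t) (sphPt t) = deriv (fun ρ => F ρ t) r := by
  rw [← (hasDerivAt_comp_smul hf).deriv]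
  refine EventuallyEq.deriv_eq ?_
  filter_upwards [lt_mem_nhds hr] with ρ hρ
  exact polarLift_smul_sphPt hF hρ t

theorem exists_polar_of_mem_critPts_polarLift (hF : ∀ r, Function.Periodic (F r) (2 * π))
    (hf : Differentiable ℝ (polarLift F)) {x : E2} (hx : x ∈ critPts (polarLift F)) (hx0 : x ≠ 0) :
    ∃ r ∈ Ioo (0 : ℝ) 1, ∃ t ∈ Ico (0 : ℝ) (2 * π), x = r • sphPt t ∧
      deriv (fun ρ => F ρ t) r = 0 ∧ deriv (F r) t = 0 := by
  obtain ⟨t, ht, hxt⟩ := eq_norm_smul_sphPt x 0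
  have hr : 0 < ‖x‖ := norm_pos_iff.2 hx0
  have hcrit : fderiv ℝ (polarLift F) (‖x‖ • sphPt t) = 0 := hxt ▸ hx.2
  refine ⟨‖x‖, ⟨hr, mem_ball_zero_iff.1 hx.1⟩, t, by rwa [zero_add] at ht, hxt, ?_, ?_⟩
  · rw [← fderiv_polarLift_apply_sphPt hF hr (hf _), hcrit, zero_apply]
  · rw [← funext (polarLift_smul_sphPt hF hr), (hasDerivAt_comp_smul_sphPt (hf _)).deriv, hcrit,
      zero_apply]

theorem nonempty_inter_of_joinedIn_of_interlaced {S₁ S₂ : Set E2} {α θ β ζ : ℝ}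
    (hS₁ : S₁ ⊆ closedBall 0 1) (hS₂ : S₂ ⊆ closedBall 0 1) (hαθ : α < θ) (hθβ : θ < β)
    (hβζ : β < ζ) (hζα : ζ < α + 2 * π) (h₁ : JoinedIn S₁ (sphPt α) (sphPt β))
    (h₂ : JoinedIn S₂ (sphPt θ) (sphPt ζ)) : (S₁ ∩ S₂).Nonempty := by
  obtain ⟨p₁, hp₁⟩ := h₁
  obtain ⟨p₂, hp₂⟩ := h₂
  obtain ⟨s, t, hst⟩ := exists_eq_of_interlaced hαθ hθβ hβζ hζα
    ((p₁.map toComplex.continuous).cast (toComplex_sphPt α).symm (toComplex_sphPt β).symm)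
    ((p₂.map toComplex.continuous).cast (toComplex_sphPt θ).symm (toComplex_sphPt ζ).symm)
    (fun s => by simpa using hS₁ (hp₁ s)) (fun t => by simpa using hS₂ (hp₂ t))
  have hst : p₁ s = p₂ t := toComplex.injective hst
  exact ⟨p₁ s, hp₁ s, hst ▸ hp₂ t⟩

end PolarCoordinates

section SuperlevelSets

open Set Filter
open scoped Topology

variable {E α : Type*} [SeminormedAddCommGroup E] [NormedSpace ℝ E] [LinearOrder α]
  [TopologicalSpace α] [OrderTopology α] {K : Set E} {f : E → α} {c : α} {x : E}

theorem eventually_joinedIn_superlevel (hK : Convex ℝ K) (hf : ContinuousOn f K) (hx : x ∈ K)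
    (hc : c < f x) : ∀ᶠ y in 𝓝[K] x, JoinedIn (K ∩ f ⁻¹' Ioi c) x y := by
  obtain ⟨ε, hε, hball⟩ := Metric.mem_nhdsWithin_iff.1 ((hf x hx).eventually (lt_mem_nhds hc))
  filter_upwards [self_mem_nhdsWithin, mem_nhdsWithin_of_mem_nhds (Metric.ball_mem_nhds x hε)]
    with y hy hyε
  refine JoinedIn.of_segment_subset fun z hz => ?_
  have hzK : z ∈ K := hK.segment_subset hx hy hz
  exact ⟨hzK, hball ⟨(convex_ball x ε).segment_subset (Metric.mem_ball_self hε) hyε hz, hzK⟩⟩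

theorem exists_isLocalMaxOn_joinedIn_superlevel (hKc : IsCompact K) (hK : Convex ℝ K)
    (hf : ContinuousOn f K) (hx : x ∈ K) (hc : c < f x) :
    ∃ m, JoinedIn (K ∩ f ⁻¹' Ioi c) x m ∧ IsLocalMaxOn f K m := by
  set component := {y | JoinedIn (K ∩ f ⁻¹' Ioi c) x y}
  have hsub : component ⊆ K := fun y hy => hy.target_mem.1
  have hxcomponent : x ∈ component := JoinedIn.refl ⟨hx, hc⟩
  obtain ⟨m, ⟨hm, hmK⟩, hmax⟩ := (hKc.inter_left isClosed_closure).exists_isMaxOn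
    ⟨x, subset_closure hxcomponent, hx⟩ (hf.mono inter_subset_right)
  have hle {y} (hy : y ∈ component) : f y ≤ f m := hmax ⟨subset_closure hy, hsub hy⟩
  have hnear := eventually_joinedIn_superlevel hK hf hmK (hc.trans_le (hle hxcomponent))
  have hjoined : JoinedIn (K ∩ f ⁻¹' Ioi c) x m := by
    obtain ⟨y, hmy, hxy⟩ := mem_closure_iff_nhds.1 hm _ (eventually_nhdsWithin_iff.1 hnear)
    exact hxy.trans (hmy (hsub hxy)).symm
  exact ⟨m, hjoined, hnear.mono fun y hy => hle (hjoined.trans hy)⟩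

end SuperlevelSets

/-- The elder rule of a merge tree: relating points at ever lower levels, each merger at a new level
of two unrelated points uses up one representative from `M`, and the last one survives. -/
theorem card_add_one_le_card_of_merging {ι X R : Type*} [LinearOrder R] {r : R → X → X → Prop}
    (hsymm : ∀ c x y, r c x y → r c y x) (htrans : ∀ c x y z, r c x y → r c y z → r c x z)
    (hanti : ∀ c d x y, c ≤ d → r d x y → r c x y) {Λ : Finset ι} {v : ι → R}
    (hv : Set.InjOn v Λ) {a b : ι → X} (hsep : ∀ i ∈ Λ, ¬ r (v i) (a i) (b i))
    (hmerge : ∀ i ∈ Λ, ∀ c < v i, r c (a i) (b i)) {M : Finset X} (hM : M.Nonempty)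
    (ha : ∀ i ∈ Λ, ∃ x ∈ M, r (v i) (a i) x) (hb : ∀ i ∈ Λ, ∃ x ∈ M, r (v i) (b i) x) :
    Λ.card + 1 ≤ M.card := by
  classical
  induction Λ using Finset.induction_on_max_value v generalizing M with
  | empty => simpa using hM.card_pos
  | insert j Λ hj hmax ih =>
    simp only [Finset.forall_mem_insert, Finset.coe_insert] at *
    obtain ⟨x, hxM, hx⟩ := ha.1
    obtain ⟨y, hyM, hy⟩ := hb.1
    have hxy : x ≠ y := by
      rintro rfl
      exact hsep.1 (htrans _ _ _ _ hx (hsymm _ _ _ hy))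
    have replace_y {i} (hi : i ∈ Λ) {p : X} (hp : ∃ z ∈ M, r (v i) p z) :
        ∃ z ∈ M.erase y, r (v i) p z := by
      have hij : v i < v j := (hmax i hi).lt_of_ne fun h =>
        hj (hv (Or.inr hi) (Or.inl rfl) h ▸ hi)
      obtain ⟨z, hzM, hz⟩ := hp
      obtain rfl | hzy := eq_or_ne z y
      · have hbx := htrans _ _ _ _ (hsymm _ _ _ (hmerge.1 _ hij)) (hanti _ _ _ _ hij.le hx)
        have hzb := hanti _ _ _ _ hij.le (hsymm _ _ _ hy)
        exact ⟨x, Finset.mem_erase.2 ⟨hxy, hxM⟩,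
          htrans _ _ _ _ hz (htrans _ _ _ _ hzb hbx)⟩
      · exact ⟨z, Finset.mem_erase.2 ⟨hzy, hzM⟩, hz⟩
    have hcard := ih (hv.mono (Set.subset_insert _ _)) hsep.2 hmerge.2
      ⟨x, Finset.mem_erase.2 ⟨hxy, hxM⟩⟩ (fun i hi => replace_y hi (ha.2 i hi))
      (fun i hi => replace_y hi (hb.2 i hi))
    rw [Finset.card_erase_of_mem hyM] at hcard
    rw [Finset.card_insert_of_notMem hj]
    omega

section DerivativeTests

open Set Filter
open scoped Topology

theorem eventually_deriv_mul_sub_pos {h : ℝ → ℝ} {τ : ℝ} (h₁ : deriv h τ = 0)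
    (h₂ : 0 < deriv (deriv h) τ) : ∀ᶠ t in 𝓝[≠] τ, 0 < deriv h t * (t - τ) := by
  filter_upwards [(eventually_nhdsWithin_sign_eq_of_deriv_pos h₂ h₁).filter_mono
    nhdsWithin_le_nhds, self_mem_nhdsWithin] with t hsign ht
  rcases lt_or_gt_of_ne (ht : t ≠ τ) with hlt | hgt
  · rw [sign_neg (sub_neg.2 hlt), sign_eq_neg_one_iff] at hsign
    exact mul_pos_of_neg_of_neg hsign (sub_neg.2 hlt)
  · rw [sign_pos (sub_pos.2 hgt), sign_eq_one_iff] at hsign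
    exact mul_pos hsign (sub_pos.2 hgt)

theorem eventually_lt_of_deriv_deriv_pos {h : ℝ → ℝ} {τ : ℝ} (hc : ContinuousAt h τ)
    (h₁ : deriv h τ = 0) (h₂ : 0 < deriv (deriv h) τ) : ∀ᶠ t in 𝓝[≠] τ, h τ < h t := by
  have hmin : IsLocalMin h τ := isLocalMin_of_deriv_deriv_pos h₂ h₁ hc
  filter_upwards [(eventually_eventually_nhds.2 hmin).filter_mono nhdsWithin_le_nhds,
    eventually_deriv_mul_sub_pos h₁ h₂] with t hle hderiv
  refine hle.self_of_nhds.lt_of_ne fun heq => hderiv.ne' ?_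
  have hmin_t : IsLocalMin h t := by rwa [IsLocalMin, IsMinFilter, ← heq]
  rw [hmin_t.deriv_eq_zero, zero_mul]

variable {E : Type*} [NormedAddCommGroup E] [NormedSpace ℝ E] {f : E → ℝ}

theorem exists_forall_smul_lt_of_fderiv_pos {p : E} (hp : 0 < fderiv ℝ f p p) :
    ∃ s ∈ Ioo (0 : ℝ) 1, ∀ r ∈ Ico s 1, f (r • p) < f p := by
  have hf : DifferentiableAt ℝ f p := by
    by_contra hf
    simp [fderiv_zero_of_not_differentiableAt hf] at hp
  have hderiv : HasDerivAt (fun ρ : ℝ => f (ρ • p) - f p) (fderiv ℝ f p p) 1 := by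
    simpa only [one_smul] using (hasDerivAt_comp_smul (r := 1) (by rwa [one_smul])).sub_const (f p)
  have hsign := eventually_nhdsWithin_sign_eq_of_deriv_pos (hderiv.deriv.symm ▸ hp) (by simp)
  obtain ⟨l, hl, hlsign⟩ := (mem_nhdsLE_iff_exists_mem_Ico_Ioc_subset zero_lt_one).1
    (hsign.filter_mono nhdsWithin_le_nhds)
  refine ⟨(l + 1) / 2, ⟨by linarith [hl.1], by linarith [hl.2]⟩, fun r hr => ?_⟩
  have hr_sign := hlsign ⟨by linarith [hl.2, hr.1], hr.2.le⟩
  rw [mem_ofPred_eq, sign_neg (sub_neg.2 hr.2), sign_eq_neg_one_iff] at hr_sign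
  exact sub_neg.1 hr_sign

theorem fderiv_sub_nonpos_of_isLocalMaxOn {K : Set E} {m y : E} (hmax : IsLocalMaxOn f K m)
    (hK : Convex ℝ K) (hm : m ∈ K) (hy : y ∈ K) : fderiv ℝ f m (y - m) ≤ 0 := by
  by_cases hf : DifferentiableAt ℝ f m
  · exact hmax.hasFDerivWithinAt_nonpos hf.hasFDerivAt.hasFDerivWithinAt
      (sub_mem_posTangentConeAt_of_segment_subset (hK.segment_subset hm hy))
  · simp [fderiv_zero_of_not_differentiableAt hf]

end DerivativeTests

section BoundarySaddles

open Set Metric Filter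
open scoped Topology Real

variable {f : E2 → ℝ} {τ δ s c : ℝ}

/-- The part of the closed unit disk on which `f` exceeds `c`. -/
def diskSuperlevel (f : E2 → ℝ) (c : ℝ) : Set E2 := closedBall 0 1 ∩ f ⁻¹' Ioi c

/-- The part of the closed unit disk on which `f` is below `c`. -/
def diskSublevel (f : E2 → ℝ) (c : ℝ) : Set E2 := closedBall 0 1 ∩ f ⁻¹' Iio c

/-- The restriction of `f` to the closed unit disk behaves near the boundary point of angle `τ` like
a saddle cut in half: `f` has a strict minimum along the arc of half-length `δ`, but it is smaller
than that minimum on the radial segment from radius `s` up to the boundary. -/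
structure BoundarySaddle (f : E2 → ℝ) (τ δ s : ℝ) : Prop where
  δ_pos : 0 < δ
  lt_of_arc : ∀ t ∈ Icc (τ - δ) (τ + δ), t ≠ τ → f (sphPt τ) < f (sphPt t)
  s_mem : s ∈ Ioo (0 : ℝ) 1
  lt_of_radial : ∀ r ∈ Ico s 1, f (r • sphPt τ) < f (sphPt τ)

theorem sphPt_mem_closedBall (t : ℝ) : sphPt t ∈ closedBall (0 : E2) 1 :=
  mem_closedBall_zero_iff.2 (norm_sphPt t).le

theorem diskSuperlevel_anti : Antitone (diskSuperlevel f) := fun _ _ h =>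
  inter_subset_inter_right _ (preimage_mono (Ioi_subset_Ioi h))

theorem diskSublevel_mono : Monotone (diskSublevel f) := fun _ _ h =>
  inter_subset_inter_right _ (preimage_mono (Iio_subset_Iio h))

theorem exists_isLocalMaxOn_joinedIn_diskSuperlevel (hf : Continuous f) {x : E2}
    (hx : x ∈ diskSuperlevel f c) :
    ∃ m, JoinedIn (diskSuperlevel f c) x m ∧ IsLocalMaxOn f (closedBall 0 1) m :=
  exists_isLocalMaxOn_joinedIn_superlevel (isCompact_closedBall 0 1) (convex_closedBall 0 1)
    hf.continuousOn hx.1 hx.2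

theorem exists_isLocalMinOn_joinedIn_diskSublevel (hf : Continuous f) {x : E2}
    (hx : x ∈ diskSublevel f c) :
    ∃ m, JoinedIn (diskSublevel f c) x m ∧ IsLocalMinOn f (closedBall 0 1) m :=
  exists_isLocalMaxOn_joinedIn_superlevel (α := ℝᵒᵈ) (isCompact_closedBall 0 1)
    (convex_closedBall 0 1) (continuous_toDual.comp hf).continuousOn hx.1 hx.2

namespace BoundarySaddle

theorem left_mem (h : BoundarySaddle f τ δ s) :
    sphPt (τ - δ) ∈ diskSuperlevel f (f (sphPt τ)) :=
  ⟨sphPt_mem_closedBall _, h.lt_of_arc _ ⟨le_rfl, by linarith [h.δ_pos]⟩ (by linarith [h.δ_pos])⟩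

theorem right_mem (h : BoundarySaddle f τ δ s) :
    sphPt (τ + δ) ∈ diskSuperlevel f (f (sphPt τ)) :=
  ⟨sphPt_mem_closedBall _, h.lt_of_arc _ ⟨by linarith [h.δ_pos], le_rfl⟩ (by linarith [h.δ_pos])⟩

theorem joinedIn_arc (h : BoundarySaddle f τ δ s) (hc : c < f (sphPt τ)) :
    JoinedIn (diskSuperlevel f c) (sphPt (τ - δ)) (sphPt (τ + δ)) := by
  have hle : τ - δ ≤ τ + δ := by linarith [h.δ_pos]
  refine (((convex_Icc _ _).isPathConnected (nonempty_Icc.2 hle)).image continuous_sphPt).joinedIn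
    _ (mem_image_of_mem _ (left_mem_Icc.2 hle)) _ (mem_image_of_mem _ (right_mem_Icc.2 hle))
    |>.mono ?_
  rintro _ ⟨t, ht, rfl⟩
  refine ⟨sphPt_mem_closedBall t, ?_⟩
  obtain rfl | hne := eq_or_ne t τ
  · exact hc
  · exact hc.trans (h.lt_of_arc t ht hne)

theorem joinedIn_radial (h : BoundarySaddle f τ δ s) :
    JoinedIn (insert (sphPt τ) (diskSublevel f (f (sphPt τ)))) (sphPt τ) (s • sphPt τ) := by
  have hle : s ≤ 1 := h.s_mem.2.le
  refine (((convex_Icc _ _).isPathConnected (nonempty_Icc.2 hle)).image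
    (f := fun r : ℝ => r • sphPt τ) (by fun_prop)).joinedIn
    _ ⟨1, right_mem_Icc.2 hle, one_smul ℝ _⟩ _ (mem_image_of_mem _ (left_mem_Icc.2 hle)) |>.mono ?_
  rintro _ ⟨r, hr, rfl⟩
  obtain rfl | hlt := hr.2.eq_or_lt
  · exact Or.inl (one_smul ℝ _)
  · have hnorm := norm_smul_sphPt (h.s_mem.1.le.trans hr.1) τ
    exact Or.inr ⟨mem_closedBall_zero_iff.2 (hnorm.trans_le hr.2), h.lt_of_radial r ⟨hr.1, hlt⟩⟩

theorem radial_mem (h : BoundarySaddle f τ δ s) :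
    s • sphPt τ ∈ diskSublevel f (f (sphPt τ)) :=
  ⟨mem_closedBall_zero_iff.2 ((norm_smul_sphPt h.s_mem.1.le τ).trans_le h.s_mem.2.le),
    h.lt_of_radial s ⟨le_rfl, h.s_mem.2⟩⟩

/-- A path above the saddle value between the ends of the arc separates the inner end of the radial
segment from the rest of the circle. -/
theorem mem_ball_of_joinedIn (h : BoundarySaddle f τ δ s)
    (hends : JoinedIn (diskSuperlevel f (f (sphPt τ))) (sphPt (τ - δ)) (sphPt (τ + δ))) {y : E2}
    (hy : JoinedIn (diskSublevel f (f (sphPt τ))) (s • sphPt τ) y) : y ∈ ball (0 : E2) 1 := by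
  by_contra hout
  have hnorm : ‖y‖ = 1 :=
    (mem_closedBall_zero_iff.1 hy.target_mem.1).antisymm (not_lt.1 (mt mem_ball_zero_iff.2 hout))
  obtain ⟨ζ, hζ, hyζ⟩ := eq_norm_smul_sphPt y (τ - δ)
  rw [hnorm, one_smul] at hyζ
  subst hyζ
  have hlow : f (sphPt ζ) < f (sphPt τ) := hy.target_mem.2
  have hζ_gt : τ + δ < ζ := by
    by_contra! hle
    exact hlow.not_gt (h.lt_of_arc ζ ⟨hζ.1, hle⟩ (ne_of_apply_ne (f ∘ sphPt) hlow.ne))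
  have hpath := h.joinedIn_radial.trans (hy.mono (subset_insert _ _))
  obtain ⟨x, ⟨-, (hx_gt : f (sphPt τ) < f x)⟩, hx⟩ :=
    nonempty_inter_of_joinedIn_of_interlaced inter_subset_left
      (insert_subset (sphPt_mem_closedBall τ) inter_subset_left) (by linarith [h.δ_pos])
      (by linarith [h.δ_pos]) hζ_gt hζ.2 hends hpath
  obtain rfl | ⟨-, (hx_lt : f x < f (sphPt τ))⟩ := hx
  · exact lt_irrefl _ hx_gt
  · exact lt_asymm hx_gt hx_lt

end BoundarySaddle

theorem isLocalMax_of_isLocalMaxOn_closedBall {m : E2} (hm : m ∈ ball (0 : E2) 1)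
    (hmax : IsLocalMaxOn f (closedBall 0 1) m) : IsLocalMax f m :=
  hmax.isLocalMax (mem_of_superset (isOpen_ball.mem_nhds hm) ball_subset_closedBall)

theorem isLocalMin_of_isLocalMinOn_closedBall {m : E2} (hm : m ∈ ball (0 : E2) 1)
    (hmin : IsLocalMinOn f (closedBall 0 1) m) : IsLocalMin f m :=
  hmin.isLocalMin (mem_of_superset (isOpen_ball.mem_nhds hm) ball_subset_closedBall)

theorem infinite_critPts_of_isLocalMax_of_isLocalMin {m : E2} (hm : m ∈ ball (0 : E2) 1)
    (hmax : IsLocalMax f m) (hmin : IsLocalMin f m) : (critPts f).Infinite := by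
  have hconst : f =ᶠ[𝓝 m] fun _ => f m := by
    filter_upwards [hmax, hmin] with y hle hge using hle.antisymm hge
  refine infinite_of_mem_nhds m ?_
  filter_upwards [hconst.fderiv (𝕜 := ℝ), isOpen_ball.mem_nhds hm] with y hy hyball
  exact ⟨hyball, hy.trans (fderiv_const_apply _)⟩

variable {ι : Type*} {T : Finset ι} {θ δ s : ι → ℝ}

theorem card_add_one_le_ncard_localMax (hf : Continuous f)
    (hM : {m ∈ ball (0 : E2) 1 | IsLocalMax f m}.Finite)
    (hmax : ∀ m, IsLocalMaxOn f (closedBall 0 1) m → m ∈ closedBall 0 1 → m ∈ ball 0 1)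
    (hT : ∀ i ∈ T, BoundarySaddle f (θ i) (δ i) (s i))
    (hinj : InjOn (fun i => f (sphPt (θ i))) T)
    (hsep : ∀ i ∈ T, ¬ JoinedIn (diskSuperlevel f (f (sphPt (θ i))))
      (sphPt (θ i - δ i)) (sphPt (θ i + δ i))) :
    T.card + 1 ≤ {m ∈ ball (0 : E2) 1 | IsLocalMax f m}.ncard := by
  have exists_max {c x} (hx : x ∈ diskSuperlevel f c) :
      ∃ m ∈ hM.toFinset, JoinedIn (diskSuperlevel f c) x m := by
    obtain ⟨m, hxm, hm⟩ := exists_isLocalMaxOn_joinedIn_diskSuperlevel hf hx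
    have hball := hmax m hm hxm.target_mem.1
    exact ⟨m, hM.mem_toFinset.2 ⟨hball, isLocalMax_of_isLocalMaxOn_closedBall hball hm⟩, hxm⟩
  obtain ⟨m, hm, -⟩ := exists_max (c := f 0 - 1) (x := 0) ⟨by simp, by simp⟩
  rw [ncard_eq_toFinset_card _ hM]
  exact card_add_one_le_card_of_merging (r := fun c => JoinedIn (diskSuperlevel f c))
    (fun _ _ _ => JoinedIn.symm) (fun _ _ _ _ => JoinedIn.trans)
    (fun _ _ _ _ hcd h => h.mono (diskSuperlevel_anti hcd)) hinj hsep
    (fun i hi _ hc => (hT i hi).joinedIn_arc hc) ⟨m, hm⟩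
    (fun i hi => exists_max (hT i hi).left_mem) (fun i hi => exists_max (hT i hi).right_mem)

theorem card_le_ncard_localMin (hf : Continuous f)
    (hM : {m ∈ ball (0 : E2) 1 | IsLocalMin f m}.Finite)
    (hT : ∀ i ∈ T, BoundarySaddle f (θ i) (δ i) (s i))
    (hinj : InjOn (fun i => f (sphPt (θ i))) T)
    (hends : ∀ i ∈ T, JoinedIn (diskSuperlevel f (f (sphPt (θ i))))
      (sphPt (θ i - δ i)) (sphPt (θ i + δ i))) :
    T.card ≤ {m ∈ ball (0 : E2) 1 | IsLocalMin f m}.ncard := by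
  choose! m hjoin hm using fun i hi =>
    exists_isLocalMinOn_joinedIn_diskSublevel hf (hT i hi).radial_mem
  have hball i (hi : i ∈ T) : m i ∈ ball (0 : E2) 1 :=
    (hT i hi).mem_ball_of_joinedIn (hends i hi) (hjoin i hi)
  have hne i (hi : i ∈ T) j (hj : j ∈ T) (hij : f (sphPt (θ i)) < f (sphPt (θ j))) :
      m i ≠ m j := by
    intro heq
    have hsub : diskSublevel f (f (sphPt (θ i))) ⊆ diskSublevel f (f (sphPt (θ j))) :=
      diskSublevel_mono hij.le
    have hescape : JoinedIn (diskSublevel f (f (sphPt (θ j)))) (s j • sphPt (θ j))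
        (sphPt (θ i)) :=
      ((hjoin j hj).trans ((heq ▸ hjoin i hi).symm.mono hsub)).trans
        ((hT i hi).joinedIn_radial.symm.mono
          (insert_subset ⟨sphPt_mem_closedBall _, hij⟩ hsub))
    exact (mem_ball_zero_iff.1 ((hT j hj).mem_ball_of_joinedIn (hends j hj) hescape)).ne
      (norm_sphPt _)
  have hm_inj : InjOn m T := by
    intro i hi j hj heq
    rcases lt_trichotomy (f (sphPt (θ i))) (f (sphPt (θ j))) with hlt | hval | hgt
    · exact absurd heq (hne i hi j hj hlt)
    · exact hinj hi hj hval
    · exact absurd heq.symm (hne j hj i hi hgt)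
  rw [← ncard_coe_finset]
  exact ncard_le_ncard_of_injOn m
    (fun i hi => ⟨hball i hi, isLocalMin_of_isLocalMinOn_closedBall (hball i hi) (hm i hi)⟩)
    hm_inj hM

theorem card_add_one_le_encard_critPts (hf : Continuous f)
    (hmax : ∀ m, IsLocalMaxOn f (closedBall 0 1) m → m ∈ closedBall 0 1 → m ∈ ball 0 1)
    (hT : ∀ i ∈ T, BoundarySaddle f (θ i) (δ i) (s i))
    (hinj : InjOn (fun i => f (sphPt (θ i))) T) :
    ((T.card + 1 : ℕ) : ℕ∞) ≤ (critPts f).encard := by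
  classical
  by_cases hfin : (critPts f).Finite
  swap
  · exact (Infinite.encard_eq hfin).symm ▸ le_top
  set maxima := {m ∈ ball (0 : E2) 1 | IsLocalMax f m}
  set minima := {m ∈ ball (0 : E2) 1 | IsLocalMin f m}
  have hmaxima : maxima ⊆ critPts f := fun m hm => ⟨hm.1, hm.2.fderiv_eq_zero⟩
  have hminima : minima ⊆ critPts f := fun m hm => ⟨hm.1, hm.2.fderiv_eq_zero⟩
  have hdisj : Disjoint maxima minima := disjoint_left.2 fun m h h' =>
    infinite_critPts_of_isLocalMax_of_isLocalMin h.1 h.2 h'.2 hfin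
  set merged := fun i => JoinedIn (diskSuperlevel f (f (sphPt (θ i))))
    (sphPt (θ i - δ i)) (sphPt (θ i + δ i))
  have hsub p [DecidablePred p] : ((T.filter p : Finset ι) : Set ι) ⊆ T :=
    Finset.coe_subset.2 (Finset.filter_subset p T)
  have hmax_card : _ ≤ maxima.ncard :=
    card_add_one_le_ncard_localMax (T := T.filter (¬ merged ·)) hf (hfin.subset hmaxima) hmax
      (fun i hi => hT i (Finset.mem_filter.1 hi).1) (hinj.mono (hsub _))
      (fun i hi => (Finset.mem_filter.1 hi).2)
  have hmin_card : _ ≤ minima.ncard :=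
    card_le_ncard_localMin (T := T.filter merged) hf (hfin.subset hminima)
      (fun i hi => hT i (Finset.mem_filter.1 hi).1) (hinj.mono (hsub _))
      (fun i hi => (Finset.mem_filter.1 hi).2)
  have hcard : T.card + 1 ≤ (critPts f).ncard := by
    calc T.card + 1 ≤ maxima.ncard + minima.ncard := by
          rw [← Finset.card_filter_add_card_filter_not merged]; omega
      _ = (maxima ∪ minima).ncard :=
          (ncard_union_eq hdisj (hfin.subset hmaxima) (hfin.subset hminima)).symm
      _ ≤ (critPts f).ncard := ncard_le_ncard (union_subset hmaxima hminima) hfin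
  rw [← hfin.cast_ncard_eq]
  exact_mod_cast hcard

end BoundarySaddles

section Marking

open Set Metric Filter
open scoped Topology Real ContDiff

namespace Ribbon

variable {n : ℕ} {a : Ribbon n} {U : Set (Fin n)} {f : E2 → ℝ}

open Classical in
/-- The ribbon `a` marked anew, so that an extension increases outward at the nodes in `U` and
decreases outward at the others. -/
def withOutward (a : Ribbon n) (U : Set (Fin n)) : Ribbon n where
  __ := a
  ν i := if i ∈ U ↔ deriv (deriv a.g) (a.θ i) < 0 then 1 else -1
  nu_sign i := by split_ifs <;> simp

/-- The ribbon of `-φ`, with the same nodes and the same signs. -/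
def neg (a : Ribbon n) : Ribbon n where
  __ := a
  g := -a.g
  smooth_g := a.smooth_g.neg
  periodic_g := a.periodic_g.comp Neg.neg
  node_crit i := by simpa using a.node_crit i
  node_nondeg i := by simpa using a.node_nondeg i
  crit_only t ht h := a.crit_only t ht (by simpa using h)
  values_distinct i j h := a.values_distinct i j (neg_injective h)

theorem deriv_deriv_neg_g (a : Ribbon n) : deriv (deriv a.neg.g) = -deriv (deriv a.g) := by
  funext t
  simp [neg]

theorem deriv_g_eq_of_comp_sphPt (hf : Differentiable ℝ f) (hg : ∀ t, f (sphPt t) = a.g t) (t : ℝ) :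
    deriv a.g t = fderiv ℝ f (sphPt t) (sphPt (t + π / 2)) := by
  rw [← funext hg]
  simpa only [one_smul] using (hasDerivAt_comp_smul_sphPt (r := 1) (hf _)).deriv

theorem fderiv_sphPt_ne_zero (hf : Differentiable ℝ f) (hg : ∀ t, f (sphPt t) = a.g t)
    (hnode : ∀ i, fderiv ℝ f (sphPt (a.θ i)) (sphPt (a.θ i)) ≠ 0) {x : E2}
    (hx : x ∈ sphere (0 : E2) 1) : fderiv ℝ f x ≠ 0 := by
  obtain ⟨t, ht, hxt⟩ := eq_norm_smul_sphPt x 0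
  rw [mem_sphere_zero_iff_norm.1 hx, one_smul] at hxt
  intro hzero
  rw [hxt] at hzero
  have hderiv : deriv a.g t = 0 := by
    rw [deriv_g_eq_of_comp_sphPt hf hg, hzero, zero_apply]
  obtain ⟨i, rfl⟩ := a.crit_only t (by rwa [zero_add] at ht) hderiv
  exact hnode i (by rw [hzero, zero_apply])

theorem isExtension_withOutward_iff :
    IsExtension (a.withOutward U) f ↔ ContDiff ℝ ∞ f ∧ (∀ t, f (sphPt t) = a.g t) ∧
      (∀ i ∈ U, 0 < fderiv ℝ f (sphPt (a.θ i)) (sphPt (a.θ i))) ∧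
      ∀ i ∉ U, fderiv ℝ f (sphPt (a.θ i)) (sphPt (a.θ i)) < 0 := by
  have hsign (i : Fin n) : ((deriv (deriv a.g) (a.θ i) < 0 →
        0 < ((a.withOutward U).ν i : ℝ) * ⟪gradient f (sphPt (a.θ i)), sphPt (a.θ i)⟫) ∧
      (0 < deriv (deriv a.g) (a.θ i) →
        ((a.withOutward U).ν i : ℝ) * ⟪gradient f (sphPt (a.θ i)), sphPt (a.θ i)⟫ < 0)) ↔
      (i ∈ U → 0 < fderiv ℝ f (sphPt (a.θ i)) (sphPt (a.θ i))) ∧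
      (i ∉ U → fderiv ℝ f (sphPt (a.θ i)) (sphPt (a.θ i)) < 0) := by
    rw [inner_gradient_left]
    rcases (a.node_nondeg i).lt_or_gt with h | h <;> by_cases hU : i ∈ U <;>
      simp [withOutward, h, hU, h.not_gt]
  constructor
  · rintro ⟨hf, hg, -, hnodes⟩
    exact ⟨hf, hg, fun i => ((hsign i).1 (hnodes i)).1, fun i => ((hsign i).1 (hnodes i)).2⟩
  · rintro ⟨hf, hg, hU, hUc⟩
    refine ⟨hf, hg, fun x => fderiv_sphPt_ne_zero (hf.differentiable (by simp)) hg fun i => ?_,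
      fun i => (hsign i).2 ⟨hU i, hUc i⟩⟩
    exact (em (i ∈ U)).elim (fun hi => (hU i hi).ne') fun hi => (hUc i hi).ne

theorem isExtension_neg_withOutward_neg_iff :
    IsExtension (a.neg.withOutward U) (-f) ↔ IsExtension (a.withOutward Uᶜ) f := by
  have hsmooth : ContDiff ℝ ∞ (-f) ↔ ContDiff ℝ ∞ f :=
    ⟨fun h => neg_neg f ▸ h.neg, fun h => h.neg⟩
  rw [isExtension_withOutward_iff, isExtension_withOutward_iff, hsmooth]
  simp [neg, fderiv_neg, and_comm]

theorem critPts_neg (f : E2 → ℝ) : critPts (-f) = critPts f := by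
  simp [critPts, fderiv_neg]

theorem gammaR_neg_withOutward (a : Ribbon n) (U : Set (Fin n)) :
    gammaR (a.neg.withOutward U) = gammaR (a.withOutward Uᶜ) := by
  rw [gammaR, gammaR]
  congr 1
  ext k
  refine (Equiv.neg (E2 → ℝ)).exists_congr_right.symm.trans (exists_congr fun f => ?_)
  simp [critPts_neg, isExtension_neg_withOutward_neg_iff]

/-- The nodes at which `φ` has a local minimum. -/
def minima (a : Ribbon n) : Finset (Fin n) :=
  {i | 0 < deriv (deriv a.g) (a.θ i)}

theorem mem_minima {i : Fin n} : i ∈ a.minima ↔ 0 < deriv (deriv a.g) (a.θ i) :=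
  Finset.mem_filter_univ _

theorem card_minima_add_card_minima_neg (a : Ribbon n) : a.minima.card + a.neg.minima.card = n := by
  have hneg : a.neg.minima = a.minimaᶜ := by
    ext i
    rw [Finset.mem_compl, mem_minima, mem_minima, deriv_deriv_neg_g]
    simpa [neg] using (a.node_nondeg i).le_iff_lt.symm
  rw [hneg, Finset.card_add_card_compl, Fintype.card_fin]

theorem exists_boundarySaddle {i : Fin n} (hg : ∀ t, f (sphPt t) = a.g t) (hi : i ∈ a.minima)
    (hout : 0 < fderiv ℝ f (sphPt (a.θ i)) (sphPt (a.θ i))) :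
    ∃ δ s, BoundarySaddle f (a.θ i) δ s := by
  obtain ⟨s, hs, hradial⟩ := exists_forall_smul_lt_of_fderiv_pos hout
  obtain ⟨δ, hδ, harc⟩ := nhds_basis_closedBall.mem_iff.1 (eventually_nhdsWithin_iff.1
    (eventually_lt_of_deriv_deriv_pos a.smooth_g.continuous.continuousAt (a.node_crit i)
      (mem_minima.1 hi)))
  rw [Real.closedBall_eq_Icc] at harc
  exact ⟨δ, s, hδ, fun t ht hne => by simpa only [hg] using harc ht hne, hs, hradial⟩

theorem mem_ball_of_isLocalMaxOn {m : E2} (hg : ∀ t, f (sphPt t) = a.g t)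
    (hin : ∀ i ∉ a.minima, fderiv ℝ f (sphPt (a.θ i)) (sphPt (a.θ i)) < 0)
    (hmax : IsLocalMaxOn f (closedBall 0 1) m) (hm : m ∈ closedBall 0 1) : m ∈ ball 0 1 := by
  by_contra hout
  obtain ⟨t, ht, hmt⟩ := eq_norm_smul_sphPt m 0
  rw [(mem_closedBall_zero_iff.1 hm).antisymm (not_lt.1 (mt mem_ball_zero_iff.2 hout)),
    one_smul] at hmt
  subst hmt
  have hmax_arc : IsLocalMax a.g t := by
    have htendsto : Tendsto sphPt (𝓝 t) (𝓝[closedBall 0 1] sphPt t) :=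
      tendsto_nhdsWithin_iff.2
        ⟨continuous_sphPt.continuousAt, Eventually.of_forall sphPt_mem_closedBall⟩
    filter_upwards [htendsto.eventually hmax] with u hu
    rwa [hg, hg] at hu
  obtain ⟨i, rfl⟩ := a.crit_only t (by rwa [zero_add] at ht) hmax_arc.deriv_eq_zero
  have hi : i ∉ a.minima := fun hi => by
    obtain ⟨u, hlt, hle⟩ := ((eventually_lt_of_deriv_deriv_pos
      a.smooth_g.continuous.continuousAt (a.node_crit i) (mem_minima.1 hi)).and
        (hmax_arc.filter_mono nhdsWithin_le_nhds)).exists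
    exact hlt.not_ge hle
  have hradial := fderiv_sub_nonpos_of_isLocalMaxOn hmax (convex_closedBall 0 1) hm
    (mem_closedBall_self zero_le_one)
  rw [zero_sub, map_neg, neg_nonpos] at hradial
  exact hradial.not_gt (hin i hi)

theorem card_add_one_le_gammaR {T : Finset (Fin n)} (hT : T ⊆ a.minima) :
    ((T.card + 1 : ℕ) : ℕ∞) ≤ gammaR (a.withOutward T) := by
  refine le_sInf ?_
  rintro _ ⟨f, hext, rfl⟩
  obtain ⟨hsmooth, hg, hout, hin⟩ := isExtension_withOutward_iff.1 hext
  choose! δ s hsaddle using fun i (hi : i ∈ T) => exists_boundarySaddle hg (hT hi) (hout i hi)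
  exact card_add_one_le_encard_critPts hsmooth.continuous
    (fun _ => mem_ball_of_isLocalMaxOn hg fun i hi => hin i fun hiT => hi (hT hiT)) hsaddle
    (fun i _ j _ hij => a.values_distinct i j (by simpa only [hg] using hij))

end Ribbon

end Marking

section RadialProfiles

open Set Filter
open scoped Topology ContDiff

theorem hasDerivAt_expNegInvGlue (x : ℝ) :
    HasDerivAt expNegInvGlue (x⁻¹ ^ 2 * expNegInvGlue x) x := by
  simpa using expNegInvGlue.hasDerivAt_polynomial_eval_inv_mul 1 x

theorem hasDerivAt_deriv_expNegInvGlue (x : ℝ) :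
    HasDerivAt (deriv expNegInvGlue) (x⁻¹ ^ 3 * (x⁻¹ - 2) * expNegInvGlue x) x := by
  have hderiv := expNegInvGlue.hasDerivAt_polynomial_eval_inv_mul (Polynomial.X ^ 2) x
  simp only [Polynomial.eval_pow, Polynomial.eval_X] at hderiv
  rw [funext fun y => (hasDerivAt_expNegInvGlue y).deriv]
  convert hderiv using 2
  simp only [Polynomial.derivative_X_pow, Polynomial.eval_mul, Polynomial.eval_sub,
    Polynomial.eval_pow, Polynomial.eval_X, Polynomial.eval_C, Nat.cast_ofNat]
  ring

theorem monotoneOn_deriv_expNegInvGlue : MonotoneOn (deriv expNegInvGlue) (Iic (1 / 2)) := by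
  refine monotoneOn_of_hasDerivWithinAt_nonneg (convex_Iic _)
    (fun x _ => (hasDerivAt_deriv_expNegInvGlue x).continuousAt.continuousWithinAt)
    (fun x _ => (hasDerivAt_deriv_expNegInvGlue x).hasDerivWithinAt) fun x hx => ?_
  obtain hx0 | hx0 := le_or_gt x 0
  · rw [expNegInvGlue.zero_of_nonpos hx0, mul_zero]
  · have hinv : 2 ≤ x⁻¹ := by
      rw [le_inv_comm₀ two_pos hx0]
      simpa using interior_subset hx
    exact mul_nonneg (mul_nonneg (by positivity) (sub_nonneg.2 hinv)) (expNegInvGlue.nonneg x)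

theorem mul_expNegInvGlue_le_deriv {a c x : ℝ} (ha : 0 < a) (hca : c ≤ 4 / a) (hx : x ≤ a / 2) :
    c * expNegInvGlue x ≤ deriv expNegInvGlue x * a := by
  rw [(hasDerivAt_expNegInvGlue x).deriv, mul_right_comm]
  obtain hx0 | hx0 := le_or_gt x 0
  · rw [expNegInvGlue.zero_of_nonpos hx0, mul_zero, mul_zero]
  · refine mul_le_mul_of_nonneg_right ?_ (expNegInvGlue.nonneg x)
    calc c ≤ 4 / a := hca
      _ = (a / 2)⁻¹ ^ 2 * a := by field_simp; norm_num
      _ ≤ x⁻¹ ^ 2 * a := by gcongr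

/-- A smooth convex function on `y ≤ 1` that vanishes up to `1 / 2`, reaches `1` at `1`, and grows
at logarithmic rate at least `c`. It is used as a function of the squared radius, to switch on the
boundary data away from the origin. -/
structure RadialProfile (P : ℝ → ℝ) (c : ℝ) : Prop where
  contDiff : ContDiff ℝ ∞ P
  eq_zero : ∀ y ≤ 1 / 2, P y = 0
  pos : ∀ y, 1 / 2 < y → 0 < P y
  map_one : P 1 = 1
  monotoneOn_deriv : MonotoneOn (deriv P) (Iic 1)
  mul_le_deriv : ∀ y ≤ 1, c * P y ≤ deriv P y

theorem exists_radialProfile (c : ℝ) : ∃ P, RadialProfile P c := by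
  obtain ⟨a, ha, ha1, hca⟩ : ∃ a : ℝ, 0 < a ∧ a ≤ 1 ∧ c ≤ 4 / a := by
    have hpos : 0 < 4 + |c| := by positivity
    refine ⟨4 / (4 + |c|), by positivity, (div_le_one hpos).2 (by simp), ?_⟩
    rw [div_div_cancel₀ four_ne_zero]
    linarith [le_abs_self c]
  set Z := expNegInvGlue (a / 2)
  have hZ : 0 < Z := expNegInvGlue.pos_of_pos (by positivity)
  set P := fun y => expNegInvGlue (a * (y - 1 / 2)) / Z
  have hP_deriv : deriv P = fun y => deriv expNegInvGlue (a * (y - 1 / 2)) * a / Z := by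
    funext y
    have hinner : HasDerivAt (fun y : ℝ => a * (y - 1 / 2)) a y := by
      simpa only [id_eq, mul_one] using ((hasDerivAt_id y).sub_const (1 / 2)).const_mul a
    have hglue := hasDerivAt_expNegInvGlue (a * (y - 1 / 2))
    exact ((hglue.differentiableAt.hasDerivAt.comp y hinner).div_const Z).deriv
  refine ⟨P, (expNegInvGlue.contDiff.comp (by fun_prop)).div_const Z, fun y hy => ?_,
    fun y hy => ?_, ?_, fun y hy z hz hyz => ?_, fun y hy => ?_⟩
  · have harg : a * (y - 1 / 2) ≤ 0 := mul_nonpos_of_nonneg_of_nonpos ha.le (by linarith)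
    simp only [P, expNegInvGlue.zero_of_nonpos harg, zero_div]
  · exact div_pos (expNegInvGlue.pos_of_pos (mul_pos ha (by linarith))) hZ
  · have harg : a * (1 - 1 / 2) = a / 2 := by ring
    simp only [P, harg]
    exact div_self hZ.ne'
  · have hmem {y : ℝ} (hy : y ≤ 1) : a * (y - 1 / 2) ≤ 1 / 2 := by nlinarith
    have hmono := monotoneOn_deriv_expNegInvGlue (hmem hy) (hmem hz) (by gcongr)
    rw [hP_deriv]
    dsimp only
    gcongr
  · rw [hP_deriv]
    dsimp only [P]
    rw [mul_div_assoc']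
    exact div_le_div_of_nonneg_right (mul_expNegInvGlue_le_deriv ha hca (by nlinarith)) hZ.le

namespace RadialProfile

variable {P : ℝ → ℝ} {c y z : ℝ}

theorem differentiable (h : RadialProfile P c) : Differentiable ℝ P :=
  h.contDiff.differentiable (by simp)

theorem hasDerivAt_comp_sq (h : RadialProfile P c) (r : ℝ) :
    HasDerivAt (fun ρ => P (ρ ^ 2)) (2 * r * deriv P (r ^ 2)) r := by
  have hsq : HasDerivAt (fun ρ : ℝ => ρ ^ 2) (2 * r) r := by simpa using hasDerivAt_pow 2 r
  rw [mul_comm]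
  exact (h.differentiable _).hasDerivAt.comp r hsq

theorem nonneg (h : RadialProfile P c) (y : ℝ) : 0 ≤ P y :=
  (le_or_gt y (1 / 2)).elim (fun hy => (h.eq_zero y hy).ge) fun hy => (h.pos y hy).le

theorem deriv_eq_zero (h : RadialProfile P c) (hy : y ≤ 1 / 2) : deriv P y = 0 :=
  IsLocalMin.deriv_eq_zero (Eventually.of_forall fun z => (h.eq_zero y hy).trans_le (h.nonneg z))

theorem deriv_nonneg (h : RadialProfile P c) (hy : y ≤ 1) : 0 ≤ deriv P y := by
  rw [← h.deriv_eq_zero ((min_le_right y 0).trans (by norm_num))]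
  exact h.monotoneOn_deriv ((min_le_left y 0).trans hy) hy (min_le_left y 0)

theorem deriv_pos (h : RadialProfile P c) (hc : 0 < c) (hy : 1 / 2 < y) (hy1 : y ≤ 1) :
    0 < deriv P y :=
  (mul_pos hc (h.pos y hy)).trans_le (h.mul_le_deriv y hy1)

theorem strictMonoOn (h : RadialProfile P c) (hc : 0 < c) : StrictMonoOn P (Icc (1 / 2) 1) :=
  strictMonoOn_of_deriv_pos (convex_Icc _ _) h.differentiable.continuous.continuousOn
    fun y hy => by
      rw [interior_Icc] at hy
      exact h.deriv_pos hc hy.1 hy.2.le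

theorem le_self (h : RadialProfile P c) (hy0 : 0 ≤ y) (hy1 : y ≤ 1) : P y ≤ y := by
  have hconvex : ConvexOn ℝ (Iic 1) P :=
    (h.monotoneOn_deriv.mono interior_subset).convexOn_of_deriv (convex_Iic 1)
      h.differentiable.continuous.continuousOn h.differentiable.differentiableOn
  have hjensen := hconvex.2 (mem_Iic.2 (zero_le_one (α := ℝ))) (mem_Iic.2 le_rfl)
    (sub_nonneg.2 hy1) hy0 (sub_add_cancel 1 y)
  simpa [h.map_one, h.eq_zero 0 (by norm_num)] using hjensen

end RadialProfile

end RadialProfiles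

section Caps

open Set Filter
open scoped Topology Real ContDiff

theorem periodic_deriv {g : ℝ → ℝ} {c : ℝ} (hg : Function.Periodic g c) :
    Function.Periodic (deriv g) c := fun t => by
  rw [← deriv_comp_add_const, funext hg]

theorem exists_forall_abs_le_of_periodic {g : ℝ → ℝ} {c : ℝ} (hp : Function.Periodic g c)
    (hc : c ≠ 0) (hg : Continuous g) : ∃ C, 0 ≤ C ∧ ∀ t, |g t| ≤ C := by
  obtain ⟨C, hC⟩ := (hp.isBounded_of_continuous hc hg).exists_norm_le
  exact ⟨C, (norm_nonneg _).trans (hC _ (mem_range_self 0)), fun t => hC _ (mem_range_self t)⟩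

theorem exists_pos_forall_le_of_periodic {g h : ℝ → ℝ} {b c : ℝ} (hgp : Function.Periodic g c)
    (hhp : Function.Periodic h c) (hc : c ≠ 0) (hg : Continuous g) (hh : Continuous h)
    (hpos : ∀ t, b ≤ h t → 0 < g t) : ∃ m, 0 < m ∧ ∀ t, b ≤ h t → m ≤ g t := by
  have hpair : Function.Periodic (fun t => (h t, g t)) c := fun t => Prod.ext (hhp t) (hgp t)
  have hcompact : IsCompact (range (fun t => (h t, g t)) ∩ {q | b ≤ q.1}) :=
    (hpair.compact_of_continuous hc (hh.prodMk hg)).inter_right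
      (isClosed_le continuous_const continuous_fst)
  obtain ⟨m, hm, hle⟩ := hcompact.exists_forall_le' continuous_snd.continuousOn (a := 0) (by
    rintro _ ⟨⟨t, rfl⟩, ht⟩
    exact hpos t ht)
  exact ⟨m, hm, fun t ht => hle _ ⟨mem_range_self t, ht⟩⟩

theorem exists_forall_le_of_periodic {g : ℝ → ℝ} {c : ℝ} (hp : Function.Periodic g c)
    (hc : c ≠ 0) (hg : Continuous g) : ∃ s, ∀ t, g t ≤ g s := by
  obtain ⟨_, ⟨s, rfl⟩, hs⟩ := (hp.compact_of_continuous hc hg).exists_isGreatest (range_nonempty g)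
  exact ⟨s, fun t => hs (mem_range_self t)⟩

theorem hasDerivAt_cos_sub (τ t : ℝ) :
    HasDerivAt (fun u => Real.cos (u - τ)) (-Real.sin (t - τ)) t :=
  (Real.hasDerivAt_cos (t - τ)).comp_sub_const t τ

theorem abs_lt_of_cos_lt_cos {s δ : ℝ} (hδ : 0 ≤ δ) (hs : |s| ≤ π) (h : Real.cos δ < Real.cos s) :
    |s| < δ := by
  by_contra! hle
  have hcos := Real.cos_le_cos_of_nonneg_of_le_pi hδ hs hle
  rw [Real.cos_abs] at hcos
  exact hcos.not_gt h

theorem mul_sin_pos_of_mul_pos {x s : ℝ} (hs : |s| < π) (h : 0 < x * s) : 0 < x * Real.sin s := by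
  obtain ⟨hs1, hs2⟩ := abs_lt.1 hs
  obtain ⟨hx, hs0⟩ | ⟨hx, hs0⟩ := mul_pos_iff.1 h
  · exact mul_pos hx (Real.sin_pos_of_pos_of_lt_pi hs0 hs2)
  · exact mul_pos_of_neg_of_neg hx (Real.sin_neg_of_neg_of_neg_pi_lt hs0 hs1)

/-- `g` increases away from `τ` on the arc `1 - cos (t - τ) < ε`. Measuring the arc by the cosine
makes the condition invariant under full turns. -/
structure MinCap (g : ℝ → ℝ) (τ ε : ℝ) : Prop where
  pos : 0 < ε
  le_one : ε ≤ 1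
  deriv_mul_sin_pos : ∀ t, 1 - Real.cos (t - τ) < ε → Real.sin (t - τ) ≠ 0 →
    0 < deriv g t * Real.sin (t - τ)

theorem exists_minCap {g : ℝ → ℝ} {τ : ℝ} (hp : Function.Periodic g (2 * π)) (h₁ : deriv g τ = 0)
    (h₂ : 0 < deriv (deriv g) τ) : ∃ ε, MinCap g τ ε := by
  obtain ⟨δ₀, hδ₀, hsign⟩ := Metric.eventually_nhds_iff.1 (eventually_nhdsWithin_iff.1
    (eventually_deriv_mul_sub_pos h₁ h₂))
  set δ := min δ₀ 1
  have hδ : 0 < δ := lt_min hδ₀ one_pos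
  have hδπ : δ < π / 2 := by
    linarith [min_le_right δ₀ 1, Real.pi_gt_three]
  have hcos0 : 0 ≤ Real.cos δ := Real.cos_nonneg_of_mem_Icc ⟨by linarith, hδπ.le⟩
  have hcos1 : Real.cos δ < 1 := by
    simpa using Real.cos_lt_cos_of_nonneg_of_le_pi le_rfl (by linarith) hδ
  refine ⟨1 - Real.cos δ, by linarith, by linarith, fun t ht hsin => ?_⟩
  obtain ⟨k, hk, -⟩ := existsUnique_sub_zsmul_mem_Ico Real.two_pi_pos (t - τ) (-π)
  set s := t - τ - k • (2 * π)
  have hs : |s| ≤ π := abs_le.2 ⟨hk.1, by linarith [hk.2]⟩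
  have hts : t - τ = s + k • (2 * π) := (sub_add_cancel _ _).symm
  have hg : deriv g t = deriv g (τ + s) := by
    rw [← (periodic_deriv hp).sub_zsmul_eq k]
    congr 1
    ring
  rw [hts, Real.cos_periodic.zsmul] at ht
  rw [hts, Real.sin_periodic.zsmul] at hsin ⊢
  have hsδ : |s| < δ := abs_lt_of_cos_lt_cos hδ.le hs (by linarith)
  have hs0 : s ≠ 0 := fun h => hsin (by rw [h, Real.sin_zero])
  rw [hg]
  refine mul_sin_pos_of_mul_pos (by linarith [Real.pi_pos]) ?_
  simpa using @hsign (τ + s) (by simpa using hsδ.trans_le (min_le_left _ _)) (by simpa using hs0)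

theorem MinCap.le_one_sub_cos {g : ℝ → ℝ} {τ ε t : ℝ} (h : MinCap g τ ε) (ht : deriv g t = 0)
    (hne : Real.cos (t - τ) ≠ 1) : ε ≤ 1 - Real.cos (t - τ) := by
  by_contra! hlt
  have hsin : Real.sin (t - τ) = 0 := by
    by_contra hsin
    simpa [ht] using h.deriv_mul_sin_pos t hlt hsin
  have hcos := (Real.sin_eq_zero_iff_cos_eq.1 hsin).resolve_left hne
  linarith [h.le_one]

/-- A smooth bump on the circle, equal to `1` at `τ` and to `0` where `1 - cos (t - τ) ≥ ε`. -/
def cosBump (τ ε t : ℝ) : ℝ := Real.smoothTransition (1 - (1 - Real.cos (t - τ)) / ε)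

section CosBump

variable {g : ℝ → ℝ} {τ ε t : ℝ}

theorem contDiff_cosBump : ContDiff ℝ ∞ (cosBump τ ε) :=
  Real.smoothTransition.contDiff.comp (by fun_prop)

theorem periodic_cosBump : Function.Periodic (cosBump τ ε) (2 * π) := fun t => by
  simp only [cosBump, add_sub_right_comm, Real.cos_add_two_pi]

theorem cosBump_self : cosBump τ ε τ = 1 := by
  simp [cosBump]

theorem cosBump_eq_zero (hε : 0 < ε) (ht : ε ≤ 1 - Real.cos (t - τ)) : cosBump τ ε t = 0 :=
  Real.smoothTransition.zero_of_nonpos (sub_nonpos.2 ((one_le_div hε).2 ht))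

theorem deriv_cosBump : deriv (cosBump τ ε) t =
    -(deriv Real.smoothTransition (1 - (1 - Real.cos (t - τ)) / ε) / ε * Real.sin (t - τ)) := by
  have hinner := (((hasDerivAt_cos_sub τ t).const_sub 1).div_const ε).const_sub 1
  have houter : Differentiable ℝ Real.smoothTransition :=
    (Real.smoothTransition.contDiff (n := 1)).differentiable one_ne_zero
  refine ((houter _).hasDerivAt.comp t hinner).deriv.trans ?_
  ring

theorem MinCap.deriv_cosBump_mul_deriv_nonpos (h : MinCap g τ ε) (t : ℝ) :
    deriv (cosBump τ ε) t * deriv g t ≤ 0 := by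
  obtain hfar | hnear := le_or_gt ε (1 - Real.cos (t - τ))
  · have hmin : IsLocalMin (cosBump τ ε) t := Eventually.of_forall fun u =>
      (cosBump_eq_zero h.pos hfar).trans_le (Real.smoothTransition.nonneg _)
    rw [hmin.deriv_eq_zero, zero_mul]
  · have hsin : 0 ≤ deriv g t * Real.sin (t - τ) := by
      obtain hsin | hsin := eq_or_ne (Real.sin (t - τ)) 0
      · rw [hsin, mul_zero]
      · exact (h.deriv_mul_sin_pos t hnear hsin).le
    rw [deriv_cosBump, neg_mul, mul_assoc, mul_comm (Real.sin _), neg_nonpos]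
    exact mul_nonneg (div_nonneg Real.smoothTransition.monotone.deriv_nonneg h.pos.le) hsin

end CosBump

namespace Ribbon

variable {n : ℕ} {a : Ribbon n} {i j m : Fin n} {t ε : ℝ}

theorem cos_theta_sub_theta_ne_one (hij : i ≠ j) : Real.cos (a.θ i - a.θ j) ≠ 1 := by
  obtain ⟨hi0, hi⟩ := a.theta_mem i
  obtain ⟨hj0, hj⟩ := a.theta_mem j
  rw [Ne, Real.cos_eq_one_iff_of_lt_of_lt (by linarith) (by linarith), sub_eq_zero]
  exact a.theta_mono.injective.ne hij

theorem exists_eq_theta_add_zsmul (ht : deriv a.g t = 0) :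
    ∃ i, ∃ k : ℤ, t = a.θ i + k • (2 * π) := by
  obtain ⟨k, hk, -⟩ := existsUnique_sub_zsmul_mem_Ico Real.two_pi_pos t 0
  obtain ⟨i, hi⟩ := a.crit_only _ (by simpa using hk)
    ((periodic_deriv a.periodic_g).sub_zsmul_eq k |>.trans ht)
  exact ⟨i, k, sub_eq_iff_eq_add.1 hi⟩

theorem exists_minCap_of_mem_minima (hi : i ∈ a.minima) : ∃ ε, MinCap a.g (a.θ i) ε :=
  exists_minCap a.periodic_g (a.node_crit i) (mem_minima.1 hi)

/-- A periodic function equal to `1` at the nodes in `T` and to `0` at the others, and monotone in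
the direction opposite to `φ`. -/
structure Bump (a : Ribbon n) (T : Finset (Fin n)) (β : ℝ → ℝ) : Prop where
  contDiff : ContDiff ℝ ∞ β
  periodic : Function.Periodic β (2 * π)
  deriv_mul_deriv_nonpos : ∀ t, deriv β t * deriv a.g t ≤ 0
  eq_one : ∀ i ∈ T, β (a.θ i) = 1
  eq_zero : ∀ i ∉ T, β (a.θ i) = 0

theorem exists_bump {T : Finset (Fin n)} (hT : T ⊆ a.minima) : ∃ β, a.Bump T β := by
  choose! ε hcap using fun i (hi : i ∈ T) => exists_minCap_of_mem_minima (hT hi)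
  have hzero {i j : Fin n} (hi : i ∈ T) (hij : j ≠ i) : cosBump (a.θ i) (ε i) (a.θ j) = 0 :=
    cosBump_eq_zero (hcap i hi).pos
      ((hcap i hi).le_one_sub_cos (a.node_crit j) (cos_theta_sub_theta_ne_one hij))
  refine ⟨fun t => ∑ i ∈ T, cosBump (a.θ i) (ε i) t, ContDiff.sum fun i _ => contDiff_cosBump,
    fun t => Finset.sum_congr rfl fun i _ => periodic_cosBump t, fun t => ?_, fun i hi => ?_,
    fun j hj => Finset.sum_eq_zero fun i hi => hzero hi (ne_of_mem_of_not_mem hi hj).symm⟩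
  · rw [deriv_fun_sum fun i _ => contDiff_cosBump.differentiable (by simp) t, Finset.sum_mul]
    exact Finset.sum_nonpos fun i hi => (hcap i hi).deriv_cosBump_mul_deriv_nonpos t
  · exact (Finset.sum_eq_single_of_mem i hi fun j hj hji => hzero hj hji.symm).trans cosBump_self

theorem exists_forall_g_le (a : Ribbon n) : ∃ m, ∀ t, a.g t ≤ a.g (a.θ m) := by
  obtain ⟨s, hs⟩ := exists_forall_le_of_periodic a.periodic_g Real.two_pi_pos.ne'
    a.smooth_g.continuous
  obtain ⟨m, k, rfl⟩ := exists_eq_theta_add_zsmul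
    (IsLocalMax.deriv_eq_zero (Eventually.of_forall hs))
  exact ⟨m, fun t => (hs t).trans_eq (a.periodic_g.zsmul k _)⟩

theorem mem_minima_neg_of_forall_g_le (hm : ∀ t, a.g t ≤ a.g (a.θ m)) : m ∈ a.neg.minima := by
  have hge : 0 < deriv (deriv a.g) (a.θ m) → False := fun hpos => by
    obtain ⟨t, ht⟩ := (eventually_lt_of_deriv_deriv_pos
      a.smooth_g.continuous.continuousAt (a.node_crit m) hpos).exists
    exact ht.not_ge (hm t)
  rw [mem_minima, deriv_deriv_neg_g]
  exact neg_pos.2 ((a.node_nondeg m).lt_of_le (not_lt.1 hge))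

theorem g_lt_of_cos_ne_one (hm : ∀ t, a.g t ≤ a.g (a.θ m)) (ht : Real.cos (t - a.θ m) ≠ 1) :
    a.g t < a.g (a.θ m) := by
  refine (hm t).lt_of_ne fun heq => ht ?_
  obtain ⟨i, k, rfl⟩ := exists_eq_theta_add_zsmul
    (IsLocalMax.deriv_eq_zero (Eventually.of_forall fun s => heq ▸ hm s))
  rw [a.periodic_g.zsmul] at heq
  rw [a.values_distinct i m heq, add_sub_cancel_left, Real.cos_periodic.zsmul_eq, Real.cos_zero]

theorem exists_gap_of_forall_g_le (hm : ∀ t, a.g t ≤ a.g (a.θ m)) (hε : 0 < ε) :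
    ∃ δ, 0 < δ ∧ ∀ t, ε ≤ 1 - Real.cos (t - a.θ m) → δ ≤ a.g (a.θ m) - a.g t :=
  exists_pos_forall_le_of_periodic (c := 2 * π) (fun t => by rw [a.periodic_g t])
    (fun t => by rw [add_sub_right_comm, Real.cos_add_two_pi]) Real.two_pi_pos.ne'
    (continuous_const.sub a.smooth_g.continuous) (by fun_prop)
    fun t ht => sub_pos.2 (g_lt_of_cos_ne_one hm fun hcos => by linarith)

end Ribbon

end Caps

section SaddleModel

open Set Filter Metric
open scoped Topology Real ContDiff

theorem gammaR_le_encard_critPts {n : ℕ} {a : Ribbon n} {f : E2 → ℝ} (hf : IsExtension a f) :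
    gammaR a ≤ (critPts f).encard :=
  sInf_le ⟨f, hf, rfl⟩

theorem Ribbon.isExtension_withOutward_polarLift {n : ℕ} {a : Ribbon n} {U : Set (Fin n)}
    {F : ℝ → ℝ → ℝ} (hF : ∀ r, Function.Periodic (F r) (2 * π)) (hf : ContDiff ℝ ∞ (polarLift F))
    (hg : F 1 = a.g) (hU : ∀ i ∈ U, 0 < deriv (fun ρ => F ρ (a.θ i)) 1)
    (hUc : ∀ i ∉ U, deriv (fun ρ => F ρ (a.θ i)) 1 < 0) :
    IsExtension (a.withOutward U) (polarLift F) := by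
  have hradial (t : ℝ) : fderiv ℝ (polarLift F) (sphPt t) (sphPt t) = deriv (fun ρ => F ρ t) 1 := by
    simpa only [one_smul] using
      fderiv_polarLift_apply_sphPt hF one_pos (hf.differentiable (by simp) ((1 : ℝ) • sphPt t))
  refine isExtension_withOutward_iff.2 ⟨hf, fun t => ?_, ?_, ?_⟩
  · simpa only [one_smul, hg] using polarLift_smul_sphPt hF one_pos t
  · simpa only [hradial] using hU
  · simpa only [hradial] using hUc

theorem RadialProfile.eq_of_deriv_mul_eq {P : ℝ → ℝ} {c y z v L K : ℝ} (h : RadialProfile P c)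
    (hc : 0 < c) (hL : 0 < L) (hK : 0 < K) (hy : y ∈ Ioc (1 / 2) 1) (hz : z ∈ Ioc (1 / 2) 1)
    (hPy : deriv P y * (v + L * (2 * P y - 1)) = K)
    (hPz : deriv P z * (v + L * (2 * P z - 1)) = K) : y = z := by
  wlog! hlt : y < z
  · exact hlt.eq_or_lt.elim Eq.symm fun hzy => (this h hc hL hK hz hy hPz hPy hzy).symm
  have hP : P y < P z :=
    h.strictMonoOn hc (Ioc_subset_Icc_self hy) (Ioc_subset_Icc_self hz) hlt
  have hP_deriv : deriv P y ≤ deriv P z := h.monotoneOn_deriv hy.2 hz.2 hlt.le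
  have hpos : 0 < v + L * (2 * P y - 1) :=
    pos_of_mul_pos_right (hPy ▸ hK) (h.deriv_nonneg hy.2)
  refine absurd (hPy.trans hPz.symm) (ne_of_lt ?_)
  calc deriv P y * (v + L * (2 * P y - 1)) ≤ deriv P z * (v + L * (2 * P y - 1)) := by gcongr
    _ < deriv P z * (v + L * (2 * P z - 1)) := by
      gcongr
      exact h.deriv_pos hc hz.1 hz.2

/-- In polar coordinates, the paraboloid `K (1 - r²)` near the origin, deformed into `g` on the unit
circle. The term in `L` reverses the radial slope on the circle at the angles where `β = 1`. -/
def saddleModel (P g β : ℝ → ℝ) (K L r t : ℝ) : ℝ :=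
  P (r ^ 2) * (g t - L * (1 - P (r ^ 2)) * β t) + K * (1 - r ^ 2)

section

variable {P g β : ℝ → ℝ} {K L c r t : ℝ}

theorem deriv_saddleModel_radial (h : RadialProfile P c) :
    deriv (fun ρ => saddleModel P g β K L ρ t) r =
      2 * r * (deriv P (r ^ 2) * (g t + L * β t * (2 * P (r ^ 2) - 1)) - K) := by
  have hsq : HasDerivAt (fun ρ : ℝ => ρ ^ 2) (2 * r) r := by simpa using hasDerivAt_pow 2 r
  have hP := h.hasDerivAt_comp_sq r
  refine ((hP.mul ((((hP.const_sub 1).const_mul L).mul_const (β t)).const_sub (g t))).add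
    ((hsq.const_sub 1).const_mul K)).deriv.trans ?_
  ring

theorem deriv_saddleModel_angular (hg : DifferentiableAt ℝ g t) (hβ : DifferentiableAt ℝ β t) :
    deriv (saddleModel P g β K L r) t =
      P (r ^ 2) * (deriv g t - L * (1 - P (r ^ 2)) * deriv β t) :=
  (((hg.hasDerivAt.sub (hβ.hasDerivAt.const_mul _)).const_mul _).add_const _).deriv

theorem periodic_saddleModel (hg : Function.Periodic g (2 * π)) (hβ : Function.Periodic β (2 * π))
    (r : ℝ) : Function.Periodic (saddleModel P g β K L r) (2 * π) := fun t => by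
  simp only [saddleModel, hg t, hβ t]

theorem saddleModel_one (h : RadialProfile P c) : saddleModel P g β K L 1 = g := by
  funext t
  simp [saddleModel, h.map_one]

theorem contDiff_polarLift_saddleModel (h : RadialProfile P c) (hg : ContDiff ℝ ∞ g)
    (hgp : Function.Periodic g (2 * π)) (hβ : ContDiff ℝ ∞ β) (hβp : Function.Periodic β (2 * π)) :
    ContDiff ℝ ∞ (polarLift (saddleModel P g β K L)) := by
  have hP := h.contDiff
  refine contDiff_iff_contDiffAt.2 fun x => ?_
  obtain rfl | hx := eq_or_ne x 0
  · have hnear : polarLift (saddleModel P g β K L) =ᶠ[𝓝 0] fun x => K * (1 - ‖x‖ ^ 2) := by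
      filter_upwards [ball_mem_nhds 0 (show (0 : ℝ) < 1 / 2 by norm_num)] with x hx
      have hsq : ‖x‖ ^ 2 ≤ 1 / 2 := by nlinarith [mem_ball_zero_iff.1 hx, norm_nonneg x]
      simp [polarLift, saddleModel, h.eq_zero _ hsq]
    have hparaboloid : ContDiff ℝ ∞ fun x : E2 => K * (1 - ‖x‖ ^ 2) :=
      contDiff_const.mul (contDiff_const.sub (contDiff_norm_sq ℝ))
    exact hparaboloid.contDiffAt.congr_of_eventuallyEq hnear
  · refine contDiffAt_polarLift (periodic_saddleModel hgp hβp) ?_ hx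
    unfold Function.uncurry saddleModel
    fun_prop

end

namespace Ribbon

variable {n : ℕ} {a : Ribbon n} {T : Finset (Fin n)} {P β : ℝ → ℝ} {c K L : ℝ} {x : E2}

theorem Bump.contDiff_saddleModel (hβ : a.Bump T β) (h : RadialProfile P c) :
    ContDiff ℝ ∞ (polarLift (saddleModel P a.g β K L)) :=
  contDiff_polarLift_saddleModel h a.smooth_g a.periodic_g hβ.contDiff hβ.periodic

theorem Bump.deriv_g_eq_zero (hβ : a.Bump T β) {b t : ℝ} (hb : 0 ≤ b)
    (ht : deriv a.g t = b * deriv β t) : deriv a.g t = 0 := by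
  refine mul_self_eq_zero.1 (le_antisymm ?_ (mul_self_nonneg _))
  calc deriv a.g t * deriv a.g t = b * (deriv β t * deriv a.g t) := by rw [← mul_assoc, ← ht]
    _ ≤ 0 := mul_nonpos_of_nonneg_of_nonpos hb (hβ.deriv_mul_deriv_nonpos t)

theorem exists_of_mem_critPts_saddleModel (h : RadialProfile P c) (hβ : a.Bump T β)
    (hK : ∀ t, deriv P 1 * |a.g t| < K) (hL : 0 ≤ L)
    (hx : x ∈ critPts (polarLift (saddleModel P a.g β K L))) (hx0 : x ≠ 0) :
    ∃ i ∈ T, ∃ r, 0 < r ∧ x = r • sphPt (a.θ i) ∧ r ^ 2 ∈ Ioc (1 / 2) 1 ∧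
      deriv P (r ^ 2) * (a.g (a.θ i) + L * (2 * P (r ^ 2) - 1)) = K := by
  obtain ⟨r, ⟨hr0, hr1⟩, t, ht, rfl, hradial, hangular⟩ := exists_polar_of_mem_critPts_polarLift
    (periodic_saddleModel a.periodic_g hβ.periodic)
    ((hβ.contDiff_saddleModel h).differentiable (by simp)) hx hx0
  have hr_sq : r ^ 2 ≤ 1 := pow_le_one₀ hr0.le hr1.le
  rw [deriv_saddleModel_radial h] at hradial
  have hradial := sub_eq_zero.1 ((mul_eq_zero.1 hradial).resolve_left (by positivity))
  rw [deriv_saddleModel_angular (a.smooth_g.differentiable (by simp) t)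
    (hβ.contDiff.differentiable (by simp) t)] at hangular
  have hslope : 0 ≤ deriv P (r ^ 2) := h.deriv_nonneg hr_sq
  have hslope1 : deriv P (r ^ 2) ≤ deriv P 1 := h.monotoneOn_deriv hr_sq self_mem_Iic hr_sq
  have hhalf : 1 / 2 < r ^ 2 := by
    by_contra! hle
    rw [h.deriv_eq_zero hle, zero_mul] at hradial
    exact absurd hradial ((mul_nonneg (hslope.trans hslope1) (abs_nonneg _)).trans_lt (hK 0)).ne
  have hP1 : P (r ^ 2) ≤ 1 := (h.le_self (sq_nonneg r) hr_sq).trans hr_sq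
  obtain ⟨i, rfl⟩ := a.crit_only t ht (hβ.deriv_g_eq_zero (mul_nonneg hL (sub_nonneg.2 hP1))
    (sub_eq_zero.1 ((mul_eq_zero.1 hangular).resolve_left (h.pos _ hhalf).ne')))
  have hi : i ∈ T := by
    by_contra hi
    rw [hβ.eq_zero i hi, mul_zero, zero_mul, add_zero] at hradial
    refine absurd hradial (ne_of_lt ?_)
    calc deriv P (r ^ 2) * a.g (a.θ i) ≤ deriv P (r ^ 2) * |a.g (a.θ i)| := by
          gcongr
          exact le_abs_self _
      _ ≤ deriv P 1 * |a.g (a.θ i)| := by gcongr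
      _ < K := hK _
  rw [hβ.eq_one i hi, mul_one] at hradial
  exact ⟨i, hi, r, hr0, rfl, ⟨hhalf, hr_sq⟩, hradial⟩

theorem encard_critPts_saddleModel_le (h : RadialProfile P c) (hc : 0 < c) (hβ : a.Bump T β)
    (hK : ∀ t, deriv P 1 * |a.g t| < K) (hL : 0 < L) :
    (critPts (polarLift (saddleModel P a.g β K L))).encard ≤ ((T.card + 1 : ℕ) : ℕ∞) := by
  have : NeZero n := ⟨a.n_pos.ne'⟩
  have hK0 : 0 < K := (mul_nonneg (h.deriv_nonneg le_rfl) (abs_nonneg _)).trans_lt (hK 0)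
  set S := critPts (polarLift (saddleModel P a.g β K L)) \ {0}
  choose! i hi r hr hxr hr_sq hcrit using fun x (hx : x ∈ S) =>
    exists_of_mem_critPts_saddleModel h hβ hK hL.le hx.1 hx.2
  have hinj : InjOn i S := fun x hx y hy hxy => by
    have hsq := h.eq_of_deriv_mul_eq hc hL hK0 (hr_sq x hx) (hr_sq y hy) (hcrit x hx)
      (hxy ▸ hcrit y hy)
    rw [hxr x hx, hxr y hy, hxy, (pow_left_inj₀ (hr x hx).le (hr y hy).le two_ne_zero).1 hsq]
  have hS : S.encard ≤ T.card := by
    simpa using encard_le_encard_of_injOn (t := (T : Set (Fin n))) hi hinj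
  calc (critPts (polarLift (saddleModel P a.g β K L))).encard ≤ S.encard + 1 := by
        simpa [S] using encard_le_encard_sdiff_add_encard _ {(0 : E2)}
    _ ≤ ((T.card + 1 : ℕ) : ℕ∞) := by
        push_cast
        gcongr

theorem gammaR_le_card_add_one {T : Finset (Fin n)} (hT : T ⊆ a.minima) :
    gammaR (a.withOutward T) ≤ ((T.card + 1 : ℕ) : ℕ∞) := by
  obtain ⟨P, h⟩ := exists_radialProfile 1
  obtain ⟨β, hβ⟩ := exists_bump hT
  obtain ⟨C, hC0, hC⟩ := exists_forall_abs_le_of_periodic a.periodic_g Real.two_pi_pos.ne'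
    a.smooth_g.continuous
  set B := deriv P 1
  have hB : 1 ≤ B := by simpa [h.map_one] using h.mul_le_deriv 1 le_rfl
  set K := B * C + 1
  set L := C + K + 1
  have hL0 : 0 < L := by positivity
  have hK (t : ℝ) : B * |a.g t| < K :=
    (mul_le_mul_of_nonneg_left (hC t) (by positivity)).trans_lt (lt_add_one _)
  have hL (t : ℝ) : K < B * (a.g t + L) :=
    calc K < 1 * (K + 1) := by linarith
      _ ≤ B * (a.g t + L) :=
        mul_le_mul hB (by linarith [neg_le_of_abs_le (hC t)]) (by positivity) (by positivity)
  have hradial (t : ℝ) : deriv (fun ρ => saddleModel P a.g β K L ρ t) 1 =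
      2 * (B * (a.g t + L * β t) - K) := by
    rw [deriv_saddleModel_radial h, one_pow, h.map_one]
    ring
  refine (gammaR_le_encard_critPts (isExtension_withOutward_polarLift
    (periodic_saddleModel a.periodic_g hβ.periodic) (hβ.contDiff_saddleModel h)
    (saddleModel_one h) (fun i hi => ?_) fun i hi => ?_)).trans
    (encard_critPts_saddleModel_le h one_pos hβ hK hL0)
  · rw [hradial, hβ.eq_one i hi, mul_one]
    linarith [hL (a.θ i)]
  · rw [hradial, hβ.eq_zero i hi, mul_zero, add_zero]
    nlinarith [hK (a.θ i), le_abs_self (a.g (a.θ i))]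

end Ribbon

end SaddleModel

section TiltModel

open Set Filter Metric
open scoped Topology Real ContDiff

theorem inner_sphPt_sphPt (s t : ℝ) : ⟪sphPt s, sphPt t⟫ = Real.cos (t - s) := by
  simp [sphPt, PiLp.inner_apply, Fin.sum_univ_two, Real.cos_sub]

theorem polarLift_mul_cos_sub (τ : ℝ) (x : E2) :
    polarLift (fun r t => r * Real.cos (t - τ)) x = ⟪sphPt τ, x⟫ := by
  obtain rfl | hx := eq_or_ne x 0
  · simp [polarLift]
  · obtain ⟨t, -, ht⟩ := eq_norm_smul_sphPt x 0
    rw [ht, polarLift_smul_sphPt (fun r t => by rw [add_sub_right_comm, Real.cos_add_two_pi])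
      (norm_pos_iff.2 hx), real_inner_smul_right, inner_sphPt_sphPt]

/-- The excess over `g` of the tilted plane of slope `η` in the direction `τ`, through the point of
the graph of `g` at `τ`. -/
def tiltGap (g : ℝ → ℝ) (τ η t : ℝ) : ℝ :=
  g τ - η + η * Real.cos (t - τ) - g t

/-- In polar coordinates, a tilted plane near the origin, deformed into `g` on the unit circle. -/
def tiltModel (Q g : ℝ → ℝ) (τ η r t : ℝ) : ℝ :=
  g τ - η + η * (r * Real.cos (t - τ)) - Q (r ^ 2) * tiltGap g τ η t

section

variable {Q g : ℝ → ℝ} {τ ε η c r t : ℝ}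

theorem contDiff_tiltGap (hg : ContDiff ℝ ∞ g) : ContDiff ℝ ∞ (tiltGap g τ η) := by
  unfold tiltGap
  fun_prop

theorem periodic_tiltGap (hg : Function.Periodic g (2 * π)) :
    Function.Periodic (tiltGap g τ η) (2 * π) := fun t => by
  simp only [tiltGap, hg t, add_sub_right_comm t, Real.cos_add_two_pi]

theorem periodic_tiltModel (hg : Function.Periodic g (2 * π)) (r : ℝ) :
    Function.Periodic (tiltModel Q g τ η r) (2 * π) := fun t => by
  simp only [tiltModel, periodic_tiltGap hg t, add_sub_right_comm t, Real.cos_add_two_pi]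

theorem tiltModel_one (h : RadialProfile Q c) : tiltModel Q g τ η 1 = g := by
  funext t
  simp [tiltModel, tiltGap, h.map_one]

theorem tiltGap_eq_zero_of_cos_eq_one (hg : Function.Periodic g (2 * π))
    (ht : Real.cos (t - τ) = 1) : tiltGap g τ η t = 0 := by
  obtain ⟨k, hk⟩ := (Real.cos_eq_one_iff _).1 ht
  obtain rfl : t = τ + k * (2 * π) := by linarith
  simp [tiltGap, hg.int_mul k τ]

theorem deriv_tiltGap (hg : DifferentiableAt ℝ g t) :
    deriv (tiltGap g τ η) t = -(η * Real.sin (t - τ)) - deriv g t := by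
  refine ((((hasDerivAt_cos_sub τ t).const_mul η).const_add _).sub hg.hasDerivAt).deriv.trans ?_
  ring

theorem deriv_tiltModel_radial (h : RadialProfile Q c) :
    deriv (fun ρ => tiltModel Q g τ η ρ t) r =
      η * Real.cos (t - τ) - 2 * r * deriv Q (r ^ 2) * tiltGap g τ η t := by
  refine ((((hasDerivAt_mul_const _).const_mul η).const_add _).sub
    ((h.hasDerivAt_comp_sq r).mul_const _)).deriv

theorem deriv_tiltModel_angular (hg : DifferentiableAt ℝ (tiltGap g τ η) t) :
    deriv (tiltModel Q g τ η r) t =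
      -(η * (r * Real.sin (t - τ))) - Q (r ^ 2) * deriv (tiltGap g τ η) t := by
  refine (((((hasDerivAt_cos_sub τ t).const_mul r).const_mul η).const_add _).sub
    (hg.hasDerivAt.const_mul _)).deriv.trans ?_
  ring

theorem polarLift_tiltModel_eventuallyEq (h : RadialProfile Q c) :
    polarLift (tiltModel Q g τ η) =ᶠ[𝓝 0] fun x => g τ - η + η * ⟪sphPt τ, x⟫ := by
  filter_upwards [ball_mem_nhds 0 (show (0 : ℝ) < 1 / 2 by norm_num)] with x hx
  have hsq : ‖x‖ ^ 2 ≤ 1 / 2 := by nlinarith [mem_ball_zero_iff.1 hx, norm_nonneg x]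
  rw [← polarLift_mul_cos_sub]
  simp only [polarLift, tiltModel, h.eq_zero _ hsq, zero_mul, sub_zero]

theorem contDiff_polarLift_tiltModel (h : RadialProfile Q c) (hg : ContDiff ℝ ∞ g)
    (hgp : Function.Periodic g (2 * π)) : ContDiff ℝ ∞ (polarLift (tiltModel Q g τ η)) := by
  have hQ := h.contDiff
  refine contDiff_iff_contDiffAt.2 fun x => ?_
  obtain rfl | hx := eq_or_ne x 0
  · have hplane : ContDiff ℝ ∞ fun x : E2 => g τ - η + η * ⟪sphPt τ, x⟫ :=
      contDiff_const.add (contDiff_const.mul (contDiff_const.inner ℝ contDiff_id))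
    exact hplane.contDiffAt.congr_of_eventuallyEq (polarLift_tiltModel_eventuallyEq h)
  · refine contDiffAt_polarLift (periodic_tiltModel hgp) ?_ hx
    unfold Function.uncurry tiltModel tiltGap
    fun_prop

theorem fderiv_polarLift_tiltModel_zero_ne (h : RadialProfile Q c) (hη : η ≠ 0) :
    fderiv ℝ (polarLift (tiltModel Q g τ η)) 0 ≠ 0 := by
  have hplane :
      HasFDerivAt (fun x : E2 => g τ - η + η * ⟪sphPt τ, x⟫) (η • innerSL ℝ (sphPt τ)) 0 :=
    ((innerSL ℝ (sphPt τ)).hasFDerivAt.const_mul η).const_add _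
  rw [(polarLift_tiltModel_eventuallyEq h).fderiv_eq, hplane.fderiv]
  intro hzero
  have hτ := DFunLike.congr_fun hzero (sphPt τ)
  simp [norm_sphPt, hη] at hτ

/-- The smallness conditions on the slope `η` and the growth condition on the profile `Q` under
which the tilted plane is deformed into `g`, with a maximum at `τ`, without critical points. -/
structure TiltConditions (Q g : ℝ → ℝ) (τ ε η c : ℝ) : Prop where
  profile : RadialProfile Q c
  contDiff : ContDiff ℝ ∞ g
  periodic : Function.Periodic g (2 * π)
  cap : MinCap (-g) τ ε
  pos : 0 < η
  gap_le : ∀ t, ε ≤ 1 - Real.cos (t - τ) → 4 * η ≤ g τ - g t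
  one_le : 1 ≤ c
  abs_deriv_le : ∀ t, |deriv (tiltGap g τ η) t| ≤ c * (η * ε)

namespace TiltConditions

theorem two_mul_le_tiltGap (h : TiltConditions Q g τ ε η c) (ht : ε ≤ 1 - Real.cos (t - τ)) :
    2 * η ≤ tiltGap g τ η t := by
  unfold tiltGap
  nlinarith [h.gap_le t ht, h.pos, Real.neg_one_le_cos (t - τ)]

theorem not_critical_of_lt (h : TiltConditions Q g τ ε η c) (hr0 : 0 < r) (hr1 : r < 1)
    (ht : 1 - Real.cos (t - τ) < ε)
    (hradial : η * Real.cos (t - τ) - 2 * r * deriv Q (r ^ 2) * tiltGap g τ η t = 0) :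
    -(η * (r * Real.sin (t - τ))) - Q (r ^ 2) * deriv (tiltGap g τ η) t ≠ 0 := by
  intro hangular
  rw [deriv_tiltGap (h.contDiff.differentiable (by simp) t)] at hangular
  obtain hsin | hsin := eq_or_ne (Real.sin (t - τ)) 0
  · obtain hcos | hcos := Real.sin_eq_zero_iff_cos_eq.1 hsin
    · rw [tiltGap_eq_zero_of_cos_eq_one h.periodic hcos, hcos] at hradial
      linarith [h.pos]
    · linarith [h.cap.le_one]
  · have hQ : Q (r ^ 2) < r :=
      (h.profile.le_self (sq_nonneg r) (pow_le_one₀ hr0.le hr1.le)).trans_lt (by nlinarith)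
    have hg := h.cap.deriv_mul_sin_pos t ht hsin
    rw [deriv.neg] at hg
    have hplane : 0 < η * Real.sin (t - τ) ^ 2 * (r - Q (r ^ 2)) :=
      mul_pos (mul_pos h.pos (by positivity)) (sub_pos.2 hQ)
    have hprofile := mul_nonneg (h.profile.nonneg (r ^ 2)) hg.le
    refine (add_pos_of_pos_of_nonneg hplane hprofile).ne' ?_
    linear_combination -Real.sin (t - τ) * hangular

theorem four_mul_deriv_le_cos (h : TiltConditions Q g τ ε η c) (hr0 : 0 ≤ r) (hr1 : r ^ 2 ≤ 1)
    (ht : ε ≤ 1 - Real.cos (t - τ))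
    (hradial : η * Real.cos (t - τ) - 2 * r * deriv Q (r ^ 2) * tiltGap g τ η t = 0) :
    4 * r * deriv Q (r ^ 2) ≤ Real.cos (t - τ) := by
  have hQ_deriv := h.profile.deriv_nonneg hr1
  refine le_of_mul_le_mul_left ?_ h.pos
  calc η * (4 * r * deriv Q (r ^ 2)) = 2 * r * deriv Q (r ^ 2) * (2 * η) := by ring
    _ ≤ 2 * r * deriv Q (r ^ 2) * tiltGap g τ η t := by
      gcongr
      exact h.two_mul_le_tiltGap ht
    _ = η * Real.cos (t - τ) := (sub_eq_zero.1 hradial).symm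

theorem le_mul_profile (h : TiltConditions Q g τ ε η c) (hr0 : 0 ≤ r)
    (hsin : ε ≤ |Real.sin (t - τ)|)
    (hangular : -(η * (r * Real.sin (t - τ))) - Q (r ^ 2) * deriv (tiltGap g τ η) t = 0) :
    r ≤ c * Q (r ^ 2) := by
  have hη := h.pos
  have hQ := h.profile.nonneg (r ^ 2)
  refine le_of_mul_le_mul_right ?_ (mul_pos hη h.cap.pos)
  calc r * (η * ε) ≤ r * (η * |Real.sin (t - τ)|) := by gcongr
    _ = |η * (r * Real.sin (t - τ))| := by
      rw [abs_mul, abs_mul, abs_of_pos hη, abs_of_nonneg hr0]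
      ring
    _ = Q (r ^ 2) * |deriv (tiltGap g τ η) t| := by
      rw [← abs_neg, sub_eq_zero.1 hangular, abs_mul, abs_of_nonneg hQ]
    _ ≤ Q (r ^ 2) * (c * (η * ε)) := by
      gcongr
      exact h.abs_deriv_le t
    _ = c * Q (r ^ 2) * (η * ε) := by ring

theorem not_critical_of_le (h : TiltConditions Q g τ ε η c) (hr0 : 0 < r) (hr1 : r < 1)
    (ht : ε ≤ 1 - Real.cos (t - τ))
    (hradial : η * Real.cos (t - τ) - 2 * r * deriv Q (r ^ 2) * tiltGap g τ η t = 0) :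
    -(η * (r * Real.sin (t - τ))) - Q (r ^ 2) * deriv (tiltGap g τ η) t ≠ 0 := by
  intro hangular
  have hr_sq : r ^ 2 ≤ 1 := pow_le_one₀ hr0.le hr1.le
  have hcos := h.four_mul_deriv_le_cos hr0.le hr_sq ht hradial
  have hsin : ε ≤ |Real.sin (t - τ)| := by
    have hcos0 : 0 ≤ Real.cos (t - τ) :=
      hcos.trans' (mul_nonneg (by positivity) (h.profile.deriv_nonneg hr_sq))
    refine (sq_le_sq₀ h.cap.pos.le (abs_nonneg _)).1 ?_
    rw [sq_abs]
    nlinarith [Real.sin_sq_add_cos_sq (t - τ), h.cap.le_one, h.cap.pos]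
  have hr_le : r ≤ c * Q (r ^ 2) := h.le_mul_profile hr0.le hsin hangular
  have hhalf : r ^ 2 ≤ 1 / 2 := by
    have hr_deriv : r ≤ deriv Q (r ^ 2) := hr_le.trans (h.profile.mul_le_deriv _ hr_sq)
    nlinarith [Real.cos_le_one (t - τ)]
  rw [h.profile.eq_zero _ hhalf, mul_zero] at hr_le
  exact hr_le.not_gt hr0

theorem critPts_polarLift_tiltModel (h : TiltConditions Q g τ ε η c) :
    critPts (polarLift (tiltModel Q g τ η)) = ∅ := by
  refine eq_empty_of_forall_notMem fun x hx => ?_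
  have hx0 : x ≠ 0 := by
    rintro rfl
    exact fderiv_polarLift_tiltModel_zero_ne h.profile h.pos.ne' hx.2
  obtain ⟨r, ⟨hr0, hr1⟩, t, -, -, hradial, hangular⟩ := exists_polar_of_mem_critPts_polarLift
    (periodic_tiltModel h.periodic)
    ((contDiff_polarLift_tiltModel h.profile h.contDiff h.periodic).differentiable (by simp))
    hx hx0
  rw [deriv_tiltModel_radial h.profile] at hradial
  rw [deriv_tiltModel_angular ((contDiff_tiltGap h.contDiff).differentiable (by simp) t)]
    at hangular
  exact (lt_or_ge (1 - Real.cos (t - τ)) ε).elim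
    (fun ht => h.not_critical_of_lt hr0 hr1 ht hradial hangular)
    fun ht => h.not_critical_of_le hr0 hr1 ht hradial hangular

theorem deriv_tiltModel_one_neg (h : TiltConditions Q g τ ε η c)
    (ht : ε ≤ 1 - Real.cos (t - τ)) : deriv (fun ρ => tiltModel Q g τ η ρ t) 1 < 0 := by
  have hslope : 1 ≤ deriv Q 1 :=
    h.one_le.trans (by simpa [h.profile.map_one] using h.profile.mul_le_deriv 1 le_rfl)
  rw [deriv_tiltModel_radial h.profile, one_pow]
  nlinarith [h.two_mul_le_tiltGap ht, h.pos, Real.cos_le_one (t - τ)]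

theorem deriv_tiltModel_one_pos (h : TiltConditions Q g τ ε η c) :
    0 < deriv (fun ρ => tiltModel Q g τ η ρ τ) 1 := by
  have hτ : Real.cos (τ - τ) = 1 := by simp
  rw [deriv_tiltModel_radial h.profile, tiltGap_eq_zero_of_cos_eq_one h.periodic hτ, hτ]
  simpa using h.pos

end TiltConditions

end

namespace Ribbon

variable {n : ℕ} {a : Ribbon n} {m : Fin n}

theorem exists_tiltConditions (hm : ∀ t, a.g t ≤ a.g (a.θ m)) :
    ∃ Q ε η c, TiltConditions Q a.g (a.θ m) ε η c := by
  obtain ⟨ε, hcap⟩ := exists_minCap_of_mem_minima (mem_minima_neg_of_forall_g_le hm)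
  obtain ⟨δ, hδ, hgap⟩ := exists_gap_of_forall_g_le hm hcap.pos
  set η := δ / 4
  have hη : 0 < η := by positivity
  obtain ⟨C, hC0, hC⟩ := exists_forall_abs_le_of_periodic
    (periodic_deriv (periodic_tiltGap (τ := a.θ m) (η := η) a.periodic_g)) Real.two_pi_pos.ne'
    ((contDiff_tiltGap a.smooth_g).continuous_deriv (by simp))
  have hηε : 0 < η * ε := mul_pos hη hcap.pos
  set c := 1 + C / (η * ε)
  have hc : 1 ≤ c := le_add_of_nonneg_right (by positivity)
  obtain ⟨Q, hQ⟩ := exists_radialProfile c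
  refine ⟨Q, ε, η, c, hQ, a.smooth_g, a.periodic_g, hcap, hη, fun t ht => ?_, hc, fun t => ?_⟩
  · simpa only [η, mul_div_cancel₀ δ four_ne_zero] using hgap t ht
  · calc |deriv (tiltGap a.g (a.θ m) η) t| ≤ C := hC t
      _ = C / (η * ε) * (η * ε) := (div_mul_cancel₀ C hηε.ne').symm
      _ ≤ c * (η * ε) := by
        gcongr
        exact le_add_of_nonneg_left zero_le_one

theorem gammaR_withOutward_singleton (hm : ∀ t, a.g t ≤ a.g (a.θ m)) :
    gammaR (a.withOutward {m}) = 0 := by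
  obtain ⟨Q, ε, η, c, h⟩ := exists_tiltConditions hm
  have hext : IsExtension (a.withOutward {m}) (polarLift (tiltModel Q a.g (a.θ m) η)) :=
    isExtension_withOutward_polarLift (periodic_tiltModel a.periodic_g)
      (contDiff_polarLift_tiltModel h.profile a.smooth_g a.periodic_g) (tiltModel_one h.profile)
      (by
        rintro _ rfl
        exact h.deriv_tiltModel_one_pos)
      fun i hi => h.deriv_tiltModel_one_neg
        (h.cap.le_one_sub_cos (a.neg.node_crit i) (cos_theta_sub_theta_ne_one hi))
  simpa [h.critPts_polarLift_tiltModel] using gammaR_le_encard_critPts hext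

end Ribbon

end TiltModel

namespace Ribbon

variable {n : ℕ} {k : ℕ}

theorem gammaR_withOutward_of_subset_minima {a : Ribbon n} {T : Finset (Fin n)}
    (hT : T ⊆ a.minima) : gammaR (a.withOutward T) = ((T.card + 1 : ℕ) : ℕ∞) :=
  le_antisymm (gammaR_le_card_add_one hT) (card_add_one_le_gammaR hT)

theorem exists_gammaR_withOutward_eq_add_one (a : Ribbon n) (hk : k ≤ n / 2) :
    ∃ U, gammaR (a.withOutward U) = ((k + 1 : ℕ) : ℕ∞) := by
  have hcard := a.card_minima_add_card_minima_neg
  obtain hmin | hmax : k ≤ a.minima.card ∨ k ≤ a.neg.minima.card := by omega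
  · obtain ⟨T, hT, rfl⟩ := Finset.exists_subset_card_eq hmin
    exact ⟨T, gammaR_withOutward_of_subset_minima hT⟩
  · obtain ⟨T, hT, rfl⟩ := Finset.exists_subset_card_eq hmax
    exact ⟨(T : Set (Fin n))ᶜ,
      (gammaR_neg_withOutward a T).symm.trans (gammaR_withOutward_of_subset_minima hT)⟩

end Ribbon

/-- Given the boundary function data of a ribbon `a` with `n` nodes, for every integer
`0 ≤ k ≤ n/2 + 1` there exists a marking of the nodes whose resulting ribbon `b` (same `φ`
and the same nodes) satisfies `γ(b) = k`. -/
theorem stmt_15 (n : ℕ) (a : Ribbon n) (k : ℕ) (hk : k ≤ n / 2 + 1) :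
    ∃ b : Ribbon n, b.g = a.g ∧ b.θ = a.θ ∧ gammaR b = (k : ℕ∞) := by
  cases k with
  | zero =>
    obtain ⟨m, hm⟩ := a.exists_forall_g_le
    exact ⟨a.withOutward {m}, rfl, rfl, a.gammaR_withOutward_singleton hm⟩
  | succ k =>
    obtain ⟨U, hU⟩ := a.exists_gammaR_withOutward_eq_add_one (Nat.le_of_succ_le_succ hk)
    exact ⟨a.withOutward U, rfl, rfl, hU⟩
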